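/- Let α, β be positive irrationals. A map Φ : 𝒜_α → 𝒜_β is an isometric algebra isomorphism if and only if there exist unimodular constants c₁, c₂ ∈ 𝕋 and a matrix A = [[m₁,n₁],[m₂,n₂]] ∈ GL(2,ℤ) satisfying m₁ + βn₁ > 0 and m₂ + βn₂ = α(m₁ + βn₁), such that Φ(f)(z,w) = f(c₁ z^{m₁} w^{n₁}, c₂ z^{m₂} w^{n₂}) for all f ∈ 𝒜_α and all (z,w) ∈ 𝕋². -/

import Mathlib

/-!
The proof combines a description of unimodular functions in `𝒜_β` with the density of trigonometric
polynomials.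

Elements of `𝒜_β` extend along the flow `x ↦ (z e^{-it}, w e^{-iβt})` to bounded holomorphic functions
on the right half-plane, and the extension is isometric and multiplicative (`exists_extPairs`). An
isometric isomorphism preserves unimodular functions, because every point of the torus is a peak
point of `𝒜_β` (`norm_map_eq_one`). Thus the images of the characters of positive weight form a
multiplicative family of unimodular functions in `𝒜_β`. Since `α` is irrational there are characters
of arbitrarily small positive weight, so each member of the family is divisible, within the family, by
arbitrarily high powers of other members, all of which share the zeros of the given one. A zero of an
extension would therefore be a zero of infinite order, so the extensions `E` have no zeros in the open
half-plane (`ext_ne_zero`).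

For such an `E` the function `-log |E|` is nonnegative and harmonic on each half-plane, with boundary
value `0`. At a point of the torus where its value at `z = 1` is maximal, Harnack's inequality and the
Phragmén–Lindelöf principle force `E` to be an exponential (`halfPlane_exp_rigid`). The orbit of that
point is dense because `β` is irrational, so the function has a single frequency along the flow and is
a multiple of a character (`family_eq_smul_chi`).

Hence an isometric isomorphism acts on characters as composition with a monomial map
`(z, w) ↦ (c₁ z^{m₁} w^{n₁}, c₂ z^{m₂} w^{n₂})`, and it does so on all of `𝒜_α` since trigonometric
polynomials are dense (`mem_closure_span_spectrum`, `exists_monoMap`). The same applies to the inverse,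
which makes the matrix invertible over `ℤ`; as it carries the half-plane of `α` into that of `β`, it
scales weights by a constant (`weight_eq`). Conversely, the inverse of an admissible matrix divides
weights by `m₁ + β n₁ > 0`, so that the inverse monomial map carries `𝒜_β` into `𝒜_α`.
-/

open MeasureTheory

noncomputable section

/-- Borel measurable structure on the circle group `𝕋`. -/
instance : MeasurableSpace Circle := borel Circle
instance : BorelSpace Circle := ⟨rfl⟩

/-- The normalized Haar (Lebesgue) measure `μ` on the 2-torus `𝕋² = 𝕋 × 𝕋`. -/
def haarT2 : Measure (Circle × Circle) :=
  Measure.haarMeasure ⟨⟨Set.univ, isCompact_univ⟩, by simp⟩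

/-- The character `χ_{m,n}` on the 2-torus, `χ_{m,n}(z,w) = z^m * w^n`. -/
def chi (m n : ℤ) : C(Circle × Circle, ℂ) :=
  ⟨fun p => ((p.1 ^ m : Circle) : ℂ) * ((p.2 ^ n : Circle) : ℂ), by
    have h1 : Continuous fun p : Circle × Circle => p.1 ^ m :=
      (continuous_zpow m).comp continuous_fst
    have h2 : Continuous fun p : Circle × Circle => p.2 ^ n :=
      (continuous_zpow n).comp continuous_snd
    have hc : Continuous ((↑) : Circle → ℂ) := continuous_induced_dom
    exact (hc.comp h1).mul (hc.comp h2)⟩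

/-- The Fourier coefficient `f̂(m,n) = ∫_{𝕋²} f(z,w) z^{-m} w^{-n} dμ(z,w)`. -/
def fourierCoef (f : C(Circle × Circle, ℂ)) (m n : ℤ) : ℂ :=
  ∫ p, f p * chi (-m) (-n) p ∂haarT2

/-- The uniform algebra `𝒜_α ⊆ C(𝕋²,ℂ)`, as a set: those continuous functions whose
Fourier coefficients `f̂(m,n)` vanish whenever `m + α n < 0`. -/
def Aset (α : ℝ) : Set C(Circle × Circle, ℂ) :=
  {f | ∀ m n : ℤ, (m : ℝ) + α * n < 0 → fourierCoef f m n = 0}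

/-- `Φ : 𝒜_α → 𝒜_β` is an isometric algebra isomorphism: a bijection which is additive,
`ℂ`-homogeneous and multiplicative (the algebraic operations being those inherited from
the ambient algebra `C(𝕋²,ℂ)`), and isometric for the supremum norm. -/
def IsIsomIso (α β : ℝ) (Φ : ↥(Aset α) → ↥(Aset β)) : Prop :=
  Function.Bijective Φ ∧
  (∀ f g h : ↥(Aset α), (h : C(Circle × Circle, ℂ)) = ↑f + ↑g →
    (↑(Φ h) : C(Circle × Circle, ℂ)) = ↑(Φ f) + ↑(Φ g)) ∧
  (∀ (c : ℂ) (f g : ↥(Aset α)),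
    (g : C(Circle × Circle, ℂ)) = c • (f : C(Circle × Circle, ℂ)) →
    (↑(Φ g) : C(Circle × Circle, ℂ)) = c • (↑(Φ f) : C(Circle × Circle, ℂ))) ∧
  (∀ f g h : ↥(Aset α), (h : C(Circle × Circle, ℂ)) = ↑f * ↑g →
    (↑(Φ h) : C(Circle × Circle, ℂ)) = ↑(Φ f) * ↑(Φ g)) ∧
  (∀ f : ↥(Aset α), ‖(↑(Φ f) : C(Circle × Circle, ℂ))‖ = ‖(↑f : C(Circle × Circle, ℂ))‖)

/-! ### Holomorphic functions on the right half-plane -/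

open Complex in
/-- Schwarz lemma on the right half-plane: a function bounded by `1` and vanishing at `a` is bounded
by the modulus of the Blaschke factor at `a`. -/
theorem halfPlane_schwarz {F : ℂ → ℂ} (hF : DifferentiableOn ℂ F {z | 0 < z.re})
    (hb : ∀ z : ℂ, 0 < z.re → ‖F z‖ ≤ 1) {a z : ℂ} (ha : 0 < a.re) (hz : 0 < z.re)
    (h0 : F a = 0) : ‖F z‖ * ‖z + (starRingEnd ℂ) a‖ ≤ ‖z - a‖ := by
  set c : ℂ → ℂ := fun u => (a + (starRingEnd ℂ) a * u) / (1 - u) with hc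
  have hne : ∀ u ∈ Metric.ball (0 : ℂ) 1, 1 - u ≠ 0 := by
    intro u hu h
    rw [← sub_eq_zero.mp h] at hu
    simp at hu
  have hmap : Set.MapsTo c (Metric.ball 0 1) {z | 0 < z.re} := by
    intro u hu
    have h1 := hne u hu
    have h2 : 0 < normSq (1 - u) := normSq_pos.mpr h1
    have h3 : normSq u < 1 := by
      rw [normSq_eq_norm_sq]
      have : ‖u‖ < 1 := by simpa using hu
      have := norm_nonneg u
      nlinarith
    have : (c u).re = a.re * (1 - normSq u) / normSq (1 - u) := by
      simp only [hc, div_re, ← add_div]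
      congr 1
      simp [normSq_apply]
      ring
    change 0 < (c u).re
    rw [this]
    have : 0 < 1 - normSq u := by linarith
    positivity
  have hd : DifferentiableOn ℂ c (Metric.ball 0 1) := by
    refine DifferentiableOn.div (by fun_prop) (by fun_prop) hne
  have hza : z + (starRingEnd ℂ) a ≠ 0 := by
    intro h
    have := congrArg re h
    simp at this
    linarith
  set u := (z - a) / (z + (starRingEnd ℂ) a) with hu
  have hlt : ‖z - a‖ < ‖z + (starRingEnd ℂ) a‖ := by
    rw [← sq_lt_sq₀ (norm_nonneg _) (norm_nonneg _), ← normSq_eq_norm_sq, ← normSq_eq_norm_sq]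
    simp [normSq_apply]
    nlinarith
  have hpos : 0 < ‖z + (starRingEnd ℂ) a‖ := norm_pos_iff.mpr hza
  have hu1 : ‖u‖ < 1 := by
    rw [hu, norm_div, div_lt_one hpos]; exact hlt
  have hcu : c u = z := by
    have : 1 - u ≠ 0 := hne u (by simpa using hu1)
    simp only [hc]
    rw [div_eq_iff this, hu]
    field_simp
    ring
  have key := Complex.norm_le_norm_of_mapsTo_ball (f := F ∘ c) (R := 1) (hF.comp hd hmap)
    (fun v hv => by simpa using hb _ (hmap hv)) (by simp [hc, h0]) hu1
  rw [Function.comp_apply, hcu, hu, norm_div, le_div_iff₀ hpos] at key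
  exact key

theorem exists_log_halfPlane {F : ℂ → ℂ} (hF : DifferentiableOn ℂ F {z | 0 < z.re})
    (hne : ∀ z : ℂ, 0 < z.re → F z ≠ 0) :
    ∃ L : ℂ → ℂ, DifferentiableOn ℂ L {z | 0 < z.re} ∧
      ∀ z : ℂ, 0 < z.re → Complex.exp (L z) = F z := by
  have hconv : Convex ℝ {z : ℂ | 0 < z.re} := convex_halfSpace_re_gt 0
  have hopen : IsOpen {z : ℂ | 0 < z.re} := isOpen_lt continuous_const Complex.continuous_re
  have hsc : IsSimplyConnected {z : ℂ | 0 < z.re} :=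
    have := hconv.contractibleSpace ⟨1, by simp⟩
    SimplyConnectedSpace.ofContractible _
  obtain ⟨L, hLc, hL⟩ := Complex.exists_continuousOn_eqOn_exp_comp hsc hopen hF.continuousOn
    (by rintro ⟨z, hz, h⟩; exact hne z hz h)
  refine ⟨L, fun z hz => ?_, fun z hz => hL hz⟩
  have hn := hopen.mem_nhds hz
  have h1 : ContinuousAt L z := hLc.continuousAt hn
  have h2 : HasDerivAt F (deriv F z) z := ((hF z hz).differentiableAt hn).hasDerivAt
  have h3 : ∀ᶠ w in nhds z, Complex.exp (L w) = F w := by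
    filter_upwards [hn] with w hw using hL hw
  exact (HasDerivAt.of_comp_left h1 (Complex.hasDerivAt_exp (L z)) h2 (Complex.exp_ne_zero _) h3).differentiableAt.differentiableWithinAt

/-- Harnack's inequality along a horizontal ray: `-log |F|` is nonnegative and harmonic, so beyond the
line `re z = 1` it grows at most linearly in `re z`. -/
theorem halfPlane_harnack {F : ℂ → ℂ} (hF : DifferentiableOn ℂ F {z | 0 < z.re})
    (hne : ∀ z : ℂ, 0 < z.re → F z ≠ 0) (hb : ∀ z : ℂ, 0 < z.re → ‖F z‖ ≤ 1)
    {z : ℂ} (hz : 1 ≤ z.re) :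
    -Real.log ‖F z‖ ≤ -Real.log ‖F (1 + z.im * Complex.I)‖ * z.re := by
  obtain ⟨L, hLd, hL⟩ := exists_log_halfPlane hF hne
  have hlog : ∀ z : ℂ, 0 < z.re → Real.log ‖F z‖ = (L z).re := by
    intro z hz
    rw [← hL z hz, Complex.norm_exp, Real.log_exp]
  have hLn : ∀ z : ℂ, 0 < z.re → (L z).re ≤ 0 := by
    intro z hz
    rw [← hlog z hz]
    exact Real.log_nonpos (norm_nonneg _) (hb z hz)
  set w : ℂ := 1 + z.im * Complex.I with hw
  have hwre : w.re = 1 := by simp [hw]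
  have hwim : w.im = z.im := by simp [hw]
  have hz0 : 0 < z.re := by linarith
  have hw0 : 0 < w.re := by rw [hwre]; exact one_pos
  rw [hlog z hz0, hlog w hw0]
  refine le_of_forall_pos_le_add fun ε hε => ?_
  -- `W = ε - L` maps the half-plane into the open half-plane; its Cayley transform centred at
  -- `W w` falls under the Schwarz lemma.
  set δ : ℝ := ε / z.re with hδ
  have hδ0 : 0 < δ := by positivity
  set W : ℂ → ℂ := fun ζ => (δ : ℂ) - L ζ with hW
  have hWre : ∀ ζ, (W ζ).re = δ - (L ζ).re := by intro ζ; simp [hW]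
  have hWpos : ∀ ζ : ℂ, 0 < ζ.re → 0 < (W ζ).re := by
    intro ζ h; rw [hWre]; linarith [hLn ζ h]
  have hden : ∀ ζ : ℂ, 0 < ζ.re → W ζ + (starRingEnd ℂ) (W w) ≠ 0 := by
    intro ζ h h'
    have := congrArg Complex.re h'
    simp only [Complex.add_re, Complex.conj_re, Complex.zero_re] at this
    linarith [hWpos ζ h, hWpos w hw0]
  have hle : ∀ ζ : ℂ, 0 < ζ.re → ‖W ζ - W w‖ ≤ ‖W ζ + (starRingEnd ℂ) (W w)‖ := by
    intro ζ h
    rw [← sq_le_sq₀ (norm_nonneg _) (norm_nonneg _), ← Complex.normSq_eq_norm_sq,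
      ← Complex.normSq_eq_norm_sq]
    have h1 := hWpos ζ h
    have h2 := hWpos w hw0
    simp only [Complex.normSq_apply, Complex.add_re, Complex.sub_re, Complex.add_im,
      Complex.sub_im, Complex.conj_re, Complex.conj_im]
    nlinarith
  have hWd : DifferentiableOn ℂ W {z | 0 < z.re} := (differentiableOn_const _).sub hLd
  have key := halfPlane_schwarz
    (F := fun ζ => (W ζ - W w) / (W ζ + (starRingEnd ℂ) (W w)))
    ((hWd.sub_const _).div (hWd.add_const _) hden)
    (fun ζ h => by
      rw [norm_div]; exact div_le_one_of_le₀ (hle ζ h) (norm_nonneg _)) hw0 hz0 (by simp)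
  simp only [norm_div] at key
  have hp := norm_pos_iff.mpr (hden z hz0)
  have e1 : ‖z + (starRingEnd ℂ) w‖ = z.re + 1 := by
    have : z + (starRingEnd ℂ) w = ((z.re + 1 : ℝ) : ℂ) := by
      apply Complex.ext <;> simp [hw]
    rw [this, Complex.norm_real, Real.norm_of_nonneg (by linarith)]
  have e2 : ‖z - w‖ = z.re - 1 := by
    have : z - w = ((z.re - 1 : ℝ) : ℂ) := by
      apply Complex.ext <;> simp [hw]
    rw [this, Complex.norm_real, Real.norm_of_nonneg (by linarith)]
  rw [e1, e2, div_mul_eq_mul_div, div_le_iff₀ hp] at key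
  have key2 : (‖W z - W w‖ * (z.re + 1)) ^ 2 ≤ ((z.re - 1) * ‖W z + (starRingEnd ℂ) (W w)‖) ^ 2 :=
    pow_le_pow_left₀ (by positivity) key 2
  rw [mul_pow, mul_pow, ← Complex.normSq_eq_norm_sq, ← Complex.normSq_eq_norm_sq] at key2
  simp only [Complex.normSq_apply, Complex.add_re, Complex.sub_re, Complex.add_im,
      Complex.sub_im, Complex.conj_re, Complex.conj_im] at key2
  have hA := hWpos z hz0
  have hB := hWpos w hw0
  have h3 : ((W z).re - (W w).re) * (z.re + 1) ≤ (z.re - 1) * ((W z).re + (W w).re) := by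
    refine le_of_sq_le_sq (a := _) ?_ (by nlinarith)
    have : 0 ≤ ((W z).im - (W w).im) ^ 2 * ((z.re + 1) ^ 2 - (z.re - 1) ^ 2) := by
      have : (z.re + 1) ^ 2 - (z.re - 1) ^ 2 = 4 * z.re := by ring
      rw [this]; positivity
    nlinarith
  have h4 : (W z).re ≤ (W w).re * z.re := by linarith
  rw [hWre, hWre] at h4
  have h5 : δ * z.re = ε := by rw [hδ]; field_simp
  nlinarith

/-- If `F` has unimodular boundary values and `-log |F|` attains its supremum over the line `re z = 1`
at the point `1`, then `F` is an exponential. Indeed `exp (-a z) / F z` has modulus at most `1`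
(for `re z ≥ 1` by Harnack's inequality, for `re z ≤ 1` by the Phragmén–Lindelöf principle in the
strip, where `hstrip` gives boundedness), with equality at `1`. -/
theorem halfPlane_exp_rigid {F : ℂ → ℂ} (hc : Continuous F)
    (hF : DifferentiableOn ℂ F {z | 0 < z.re})
    (hne : ∀ z : ℂ, 0 < z.re → F z ≠ 0) (hb : ∀ z : ℂ, 0 < z.re → ‖F z‖ ≤ 1)
    (hu : ∀ z : ℂ, z.re = 0 → ‖F z‖ = 1) {δ : ℝ} (hδ : 0 < δ)
    (hstrip : ∀ z : ℂ, 0 ≤ z.re → z.re ≤ 1 → δ ≤ ‖F z‖) {a : ℝ}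
    (ha : ∀ z : ℂ, z.re = 1 → -Real.log ‖F z‖ ≤ a) (ha1 : -Real.log ‖F 1‖ = a) :
    ∃ c : ℂ, ∀ z : ℂ, 0 ≤ z.re → F z = c * Complex.exp (-(a * z)) := by
  have hne0 : ∀ z : ℂ, 0 ≤ z.re → F z ≠ 0 := by
    intro z hz
    rcases hz.eq_or_lt with h | h
    · rw [← norm_pos_iff, hu z h.symm]; exact one_pos
    · exact hne z h
  set G : ℂ → ℂ := fun z => Complex.exp (-(a * z)) / F z with hG
  have hGn : ∀ z, ‖G z‖ = Real.exp (-(a * z.re)) / ‖F z‖ := by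
    intro z; simp [hG, Complex.norm_exp]
  have hcl : closure {z : ℂ | 0 < z.re} = {z | 0 ≤ z.re} := Complex.closure_setOfPred_lt_re 0
  have hGd : DiffContOnCl ℂ G {z | 0 < z.re} := by
    refine ⟨DifferentiableOn.div (by fun_prop) hF fun z hz => hne z hz, ?_⟩
    rw [hcl]
    exact ContinuousOn.div (by fun_prop) hc.continuousOn fun z hz => hne0 z hz
  have hge : ∀ z : ℂ, 1 ≤ z.re → ‖G z‖ ≤ 1 := by
    intro z hz
    have h1 := halfPlane_harnack hF hne hb hz
    have h2 := ha (1 + z.im * Complex.I) (by simp)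
    have hp : 0 < ‖F z‖ := norm_pos_iff.mpr (hne z (by linarith))
    rw [hGn, div_le_one hp, ← Real.le_log_iff_exp_le hp]
    nlinarith
  have hle : ∀ z : ℂ, 0 ≤ z.re → z.re ≤ 1 → ‖G z‖ ≤ 1 := by
    intro z hz0 hz1
    refine PhragmenLindelof.vertical_strip (a := 0) (b := 1) (f := G) ?_ ?_ ?_ ?_ hz0 hz1
    · exact hGd.mono fun z hz => hz.1
    · refine ⟨0, by simp; positivity, 0, ?_⟩
      refine Asymptotics.IsBigO.of_bound (Real.exp |a| / δ) ?_
      rw [Filter.eventually_inf_principal]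
      refine Filter.Eventually.of_forall fun w hw => ?_
      rw [hGn]
      simp only [zero_mul, Real.exp_zero, norm_one, mul_one]
      have h1 := hstrip w hw.1.le hw.2.le
      have h2 : -(a * w.re) ≤ |a| := by
        have h3 := neg_abs_le a
        have h4 := le_abs_self a
        have h5 : 0 < w.re := hw.1
        have h6 : w.re < 1 := hw.2
        have h7 := abs_nonneg a
        nlinarith
      gcongr
    · intro w hw
      rw [hGn, hu w hw, hw]; simp
    · intro w hw
      exact hge w hw.ge
  have hall : ∀ z : ℂ, 0 ≤ z.re → ‖G z‖ ≤ 1 := by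
    intro z hz
    rcases le_total z.re 1 with h | h
    · exact hle z hz h
    · exact hge z h
  have hG1 : ‖G 1‖ = 1 := by
    have hp : 0 < ‖F 1‖ := norm_pos_iff.mpr (hne 1 (by simp))
    rw [hGn, ← ha1]
    simp [Real.exp_log hp, hp.ne']
  have hmax : IsMaxOn (norm ∘ G) {z : ℂ | 0 < z.re} 1 := by
    intro z hz
    simp only [Set.mem_ofPred_eq, Function.comp_apply, hG1]
    exact hall z (le_of_lt hz)
  have hcon := Complex.eqOn_closure_of_isPreconnected_of_isMaxOn_norm
    (convex_halfSpace_re_gt 0).isPreconnected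
    (isOpen_lt continuous_const Complex.continuous_re) hGd (c := 1) (by simp) hmax
  rw [hcl] at hcon
  refine ⟨(G 1)⁻¹, fun z hz => ?_⟩
  have h := hcon hz
  simp only [Function.const_apply] at h
  have hn : G 1 ≠ 0 := by rw [← norm_pos_iff, hG1]; exact one_pos
  rw [eq_inv_mul_iff_mul_eq₀ hn, ← h]
  exact div_mul_cancel₀ _ (hne0 z hz)

/-- Maximum principle for bounded functions on the right half-plane. -/
theorem halfPlane_bound {F : ℂ → ℂ} (hc : Continuous F)
    (hF : DifferentiableOn ℂ F {z | 0 < z.re}) {K C : ℝ} (hK : ∀ z, ‖F z‖ ≤ K)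
    (hC : ∀ z : ℂ, z.re = 0 → ‖F z‖ ≤ C) {z : ℂ} (hz : 0 ≤ z.re) : ‖F z‖ ≤ C := by
  refine PhragmenLindelof.right_half_plane_of_bounded_on_real ⟨hF, hc.continuousOn⟩ ?_ ?_ ?_ hz
  · refine ⟨1, by norm_num, 0, ?_⟩
    refine Asymptotics.IsBigO.of_bound K (Filter.Eventually.of_forall fun w => ?_)
    simpa using hK w
  · exact Filter.isBoundedUnder_of ⟨K, fun x => hK x⟩
  · exact fun x => hC _ (by simp)

/-! ### Fourier series on the torus -/

instance : Measure.IsHaarMeasure haarT2 := by unfold haarT2; infer_instance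

instance : IsProbabilityMeasure haarT2 :=
  ⟨Measure.haarMeasure_self (K₀ := ⟨⟨Set.univ, isCompact_univ⟩, by simp⟩)⟩

theorem chi_apply (m n : ℤ) (p : Circle × Circle) :
    chi m n p = ((p.1 ^ m * p.2 ^ n : Circle) : ℂ) := by
  simp [chi]

theorem chi_mul (m n m' n' : ℤ) : chi m n * chi m' n' = chi (m + m') (n + n') := by
  ext p
  simp only [ContinuousMap.mul_apply, chi_apply, ← Circle.coe_mul, zpow_add]
  congr 1
  exact mul_mul_mul_comm _ _ _ _

theorem chi_zero : chi 0 0 = 1 := by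
  ext p; simp [chi_apply]

theorem chi_apply_mul (m n : ℤ) (p q : Circle × Circle) :
    chi m n (p * q) = chi m n p * chi m n q := by
  simp only [chi_apply, ← Circle.coe_mul, Prod.fst_mul, Prod.snd_mul, mul_zpow]
  congr 1
  exact mul_mul_mul_comm _ _ _ _

theorem norm_chi_apply (m n : ℤ) (p : Circle × Circle) : ‖chi m n p‖ = 1 := by
  rw [chi_apply, Circle.norm_coe]

theorem integrable_T2 {E : Type*} [NormedAddCommGroup E] [NormedSpace ℝ E]
    {f : Circle × Circle → E} (hf : Continuous f) : Integrable f haarT2 := by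
  rw [← integrableOn_univ]
  exact hf.continuousOn.integrableOn_compact isCompact_univ

/-- The Fourier coefficient as a continuous linear functional on `C(𝕋²)`. -/
def fourierL (m n : ℤ) : C(Circle × Circle, ℂ) →L[ℂ] ℂ :=
  LinearMap.mkContinuous
    { toFun := fun f => fourierCoef f m n
      map_add' := fun f g => by
        simp only [fourierCoef, ContinuousMap.add_apply, add_mul]
        exact integral_add (integrable_T2 (by fun_prop)) (integrable_T2 (by fun_prop))
      map_smul' := fun c f => by
        simp only [fourierCoef, ContinuousMap.smul_apply, smul_eq_mul, mul_assoc,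
          RingHom.id_apply]
        exact integral_const_mul _ _ } 1 (fun f => by
        refine (norm_integral_le_of_norm_le_const (C := ‖f‖)
          (Filter.Eventually.of_forall fun p => ?_)).trans (by simp)
        rw [norm_mul, norm_chi_apply, mul_one]
        exact f.norm_coe_le_norm p)

theorem fourierL_apply (m n : ℤ) (f : C(Circle × Circle, ℂ)) :
    fourierL m n f = fourierCoef f m n := rfl

/-- Translating `f` by `q` multiplies its Fourier coefficients by the corresponding character. -/
theorem fourierCoef_translate (f : C(Circle × Circle, ℂ)) (m n : ℤ) (q : Circle × Circle) :
    (∫ p, f (p * q) * chi (-m) (-n) p ∂haarT2) = chi m n q * fourierCoef f m n := by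
  have h := integral_mul_right_eq_self (μ := haarT2)
    (fun p => f p * chi (-m) (-n) (p * q⁻¹)) q
  simp only [mul_inv_cancel_right] at h
  rw [h, fourierCoef, ← integral_const_mul]
  refine integral_congr_ae (Filter.Eventually.of_forall fun p => ?_)
  have h2 : chi (-m) (-n) q⁻¹ = chi m n q := by
    simp [chi_apply]
  simp only [chi_apply_mul, h2]
  ring

theorem exists_chi_ne_one {m n : ℤ} (h : (m, n) ≠ 0) : ∃ q, chi m n q ≠ 1 := by
  by_contra! hq
  apply h
  have key : ∀ k : ℤ, (∀ z : Circle, z ^ k = 1) → k = 0 := by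
    intro k hk
    have h1 := hk (Circle.exp 1)
    rw [← Circle.exp_intCast_mul, mul_one, ← Circle.exp_zero, Circle.exp_eq_exp] at h1
    obtain ⟨j, hj⟩ := h1
    rw [zero_add] at hj
    by_contra hk0
    have hj0 : j ≠ 0 := by
      rintro rfl
      simp at hj
      exact hk0 hj
    have : Real.pi = ((k / (j * 2) : ℚ) : ℝ) := by
      push_cast
      rw [hj]
      have : (j : ℝ) ≠ 0 := by exact_mod_cast hj0
      field_simp
    exact irrational_pi ⟨_, this.symm⟩
  refine Prod.ext (key m fun z => ?_) (key n fun z => ?_)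
  · have := hq (z, 1)
    exact Circle.ext (by simpa [chi_apply] using this)
  · have := hq (1, z)
    exact Circle.ext (by simpa [chi_apply] using this)

theorem fourierCoef_chi_ne {m n m' n' : ℤ} (h : (m, n) ≠ (m', n')) :
    fourierCoef (chi m n) m' n' = 0 := by
  obtain ⟨q, hq⟩ := exists_chi_ne_one (m := m - m') (n := n - n')
    (by
      intro h0
      apply h
      have := Prod.mk_inj.mp h0
      ext <;> dsimp <;> omega)
  have h1 : fourierCoef (chi m n) m' n' = ∫ p, chi (m - m') (n - n') p ∂haarT2 := by
    unfold fourierCoef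
    simp only [← ContinuousMap.mul_apply, chi_mul, sub_eq_add_neg]
  have h2 := integral_mul_right_eq_self (μ := haarT2) (fun p => chi (m - m') (n - n') p) q
  simp only [chi_apply_mul] at h2
  rw [integral_mul_const] at h2
  rw [h1]
  by_contra h3
  exact hq (mul_left_cancel₀ h3 (by rw [h2, mul_one]))

/-- The monoid of the characters indexed by a submonoid of `ℤ²`. -/
def chiMonoid (M : AddSubmonoid (ℤ × ℤ)) : Submonoid C(Circle × Circle, ℂ) where
  carrier := (fun k : ℤ × ℤ => chi k.1 k.2) '' M
  mul_mem' := by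
    rintro _ _ ⟨k, hk, rfl⟩ ⟨l, hl, rfl⟩
    exact ⟨k + l, M.add_mem hk hl, (chi_mul _ _ _ _).symm⟩
  one_mem' := ⟨0, M.zero_mem, chi_zero⟩

/-- The trigonometric polynomials with frequencies in a submonoid of `ℤ²`. -/
def trigPoly (M : AddSubmonoid (ℤ × ℤ)) : Subalgebra ℂ C(Circle × Circle, ℂ) :=
  Algebra.adjoin ℂ (chiMonoid M : Set C(Circle × Circle, ℂ))

theorem trigPoly_toSubmodule (M : AddSubmonoid (ℤ × ℤ)) :
    Subalgebra.toSubmodule (trigPoly M) =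
      Submodule.span ℂ ((fun k : ℤ × ℤ => chi k.1 k.2) '' M) := by
  rw [trigPoly, Algebra.adjoin_eq_span, Submonoid.closure_eq]
  rfl

theorem chi_mem_trigPoly {M : AddSubmonoid (ℤ × ℤ)} {k : ℤ × ℤ} (hk : k ∈ M) :
    chi k.1 k.2 ∈ trigPoly M :=
  Algebra.subset_adjoin ⟨k, hk, rfl⟩

/-- The orbit map `q ↦ (p ↦ f (p * q))` of the translation action. -/
def translates (f : C(Circle × Circle, ℂ)) : C(Circle × Circle, C(Circle × Circle, ℂ)) :=
  ContinuousMap.curry ⟨fun r => f (r.2 * r.1), by fun_prop⟩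

theorem translates_apply (f : C(Circle × Circle, ℂ)) (q p : Circle × Circle) :
    translates f q p = f (p * q) := rfl

/-- Averaging the translates of `f` against a trigonometric polynomial yields a combination of the
characters occurring in the Fourier series of `f`. -/
theorem integral_translates_mem (f : C(Circle × Circle, ℂ)) {h : C(Circle × Circle, ℂ)}
    (hh : h ∈ trigPoly ⊤) :
    (∫ q, h q • translates f q ∂haarT2) ∈
      Submodule.span ℂ {g | ∃ m n, fourierCoef f m n ≠ 0 ∧ g = chi m n} := by
  rw [← Subalgebra.mem_toSubmodule, trigPoly_toSubmodule] at hh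
  have hfint : ∀ h : C(Circle × Circle, ℂ), Integrable (fun q => h q • translates f q) haarT2 :=
    fun h => integrable_T2 (by fun_prop)
  induction hh using Submodule.span_induction with
  | mem x hx =>
    obtain ⟨⟨m, n⟩, -, rfl⟩ := hx
    have : (∫ q, chi m n q • translates f q ∂haarT2) =
        fourierCoef f (-m) (-n) • chi (-m) (-n) := by
      ext p
      have h1 := (ContinuousMap.evalCLM ℂ p).integral_comp_comm (hfint (chi m n))
      have h2 : ∀ g : C(Circle × Circle, ℂ), ContinuousMap.evalCLM ℂ p g = g p := fun _ => rfl
      simp only [h2] at h1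
      rw [← h1]
      have h3 := fourierCoef_translate f (-m) (-n) p
      simp only [neg_neg] at h3
      simp only [ContinuousMap.smul_apply, translates_apply, smul_eq_mul]
      rw [mul_comm, ← h3]
      refine integral_congr_ae (Filter.Eventually.of_forall fun q => ?_)
      simp only [mul_comm]
    change (∫ q, chi m n q • translates f q ∂haarT2) ∈ _
    rw [this]
    by_cases h0 : fourierCoef f (-m) (-n) = 0
    · rw [h0, zero_smul]; exact zero_mem _
    · exact Submodule.smul_mem _ _ (Submodule.subset_span ⟨_, _, h0, rfl⟩)
  | zero => simp
  | add x y _ _ hx hy =>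
    simp only [ContinuousMap.add_apply, add_smul]
    rw [integral_add (hfint x) (hfint y)]
    exact add_mem hx hy
  | smul c x _ hx =>
    simp only [ContinuousMap.smul_apply, smul_assoc]
    rw [integral_smul]
    exact Submodule.smul_mem _ _ hx

theorem circle_re_lt {z : Circle} (hz : z ≠ 1) : (z : ℂ).re < 1 := by
  have h1 : (z : ℂ).re ^ 2 + (z : ℂ).im ^ 2 = 1 := by
    have := Circle.normSq_coe z
    rw [Complex.normSq_apply] at this
    nlinarith
  by_contra! h
  apply hz
  have h2 : (z : ℂ).re = 1 := by nlinarith [sq_nonneg (z : ℂ).im]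
  have h3 : (z : ℂ).im = 0 := by
    rw [h2] at h1
    nlinarith
  ext
  exact Complex.ext (by simpa using h2) (by simpa using h3)

theorem circle_re_le (z : Circle) : (z : ℂ).re ≤ 1 :=
  (Complex.re_le_norm (z : ℂ)).trans_eq (Circle.norm_coe z)

theorem circle_neg_one_le_re (z : Circle) : -1 ≤ (z : ℂ).re := by
  have := Complex.abs_re_le_norm (z : ℂ)
  rw [Circle.norm_coe] at this
  exact (abs_le.mp this).1

/-- Spectral synthesis on the torus: `f` is a uniform limit of trigonometric polynomials whose
frequencies occur in the Fourier series of `f`. The approximants are the averages of the translates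
of `f` against the powers of `(1 + re z) (1 + re w)`, which peak at the identity once normalized. -/
theorem mem_closure_span_spectrum (f : C(Circle × Circle, ℂ)) :
    f ∈ (Submodule.span ℂ {g | ∃ m n, fourierCoef f m n ≠ 0 ∧ g = chi m n}).topologicalClosure := by
  set c : Circle × Circle → ℝ := fun p => (1 + (p.1 : ℂ).re) * (1 + (p.2 : ℂ).re) with hc
  have hcc : Continuous c := by fun_prop
  have h1 : ∀ z : Circle, 0 ≤ 1 + (z : ℂ).re := fun z => by linarith [circle_neg_one_le_re z]
  have hlim := tendsto_setIntegral_pow_smul_of_unique_maximum_of_isCompact_of_continuousOn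
    (μ := haarT2) (s := Set.univ) (x₀ := (1 : Circle × Circle)) (g := translates f)
    isCompact_univ (c := c) hcc.continuousOn
    (by
      rintro ⟨z, w⟩ - hy
      simp only [hc, Prod.fst_one, Prod.snd_one, Circle.coe_one, Complex.one_re]
      have hz := circle_re_le z
      have hw := circle_re_le w
      have hz' := h1 z
      have hw' := h1 w
      by_cases hz1 : z = 1
      · have : (w : ℂ).re < 1 := circle_re_lt (by rintro rfl; exact hy (by rw [hz1]; rfl))
        nlinarith
      · have := circle_re_lt hz1
        nlinarith)
    (fun p _ => mul_nonneg (h1 _) (h1 _)) (by simp [hc]) (by simp)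
    (translates f).continuous.continuousOn
  have h2 : translates f 1 = f := by ext p; simp [translates_apply]
  rw [h2] at hlim
  refine mem_closure_of_tendsto hlim (Filter.Eventually.of_forall fun k => ?_)
  simp only [Measure.restrict_univ]
  -- the kernel `c` is itself a trigonometric polynomial
  set C : C(Circle × Circle, ℂ) := (1 / 4 : ℂ) •
    ((chi 0 0 + chi 0 0 + chi 1 0 + chi (-1) 0) * (chi 0 0 + chi 0 0 + chi 0 1 + chi 0 (-1))) with hC
  have hCc : ∀ p, C p = (c p : ℂ) := by
    intro p
    have e : ∀ z : Circle, ((z : ℂ) + ((z : ℂ))⁻¹) = 2 * ((z : ℂ).re : ℂ) := by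
      intro z
      rw [← Circle.coe_inv, Circle.coe_inv_eq_conj, Complex.add_conj]
      push_cast; ring
    have e1 := e p.1
    have e2 := e p.2
    simp only [hC, hc, ContinuousMap.smul_apply, ContinuousMap.mul_apply, ContinuousMap.add_apply,
      chi_apply, smul_eq_mul, zpow_zero, zpow_one, zpow_neg, mul_one, one_mul,
      Circle.coe_one, Circle.coe_inv]
    push_cast
    linear_combination (1 / 4) * (2 + ((p.2 : ℂ) + (p.2 : ℂ)⁻¹)) * e1 +
      (1 / 4) * (2 + 2 * ((p.1 : ℂ).re : ℂ)) * e2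
  have hCm : C ∈ trigPoly ⊤ := by
    have h0 : ∀ m n, chi m n ∈ trigPoly ⊤ := fun m n =>
      chi_mem_trigPoly (k := (m, n)) (AddSubmonoid.mem_top _)
    refine Subalgebra.smul_mem _ (Subalgebra.mul_mem _ ?_ ?_) _ <;>
    exact add_mem (add_mem (add_mem (h0 _ _) (h0 _ _)) (h0 _ _)) (h0 _ _)
  have h3 := integral_translates_mem f (Subalgebra.pow_mem _ hCm k)
  have h4 : (∫ q, (C ^ k) q • translates f q ∂haarT2) = ∫ q, c q ^ k • translates f q ∂haarT2 := by
    refine integral_congr_ae (Filter.Eventually.of_forall fun q => ?_)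
    simp only [ContinuousMap.pow_apply, hCc, ← Complex.ofReal_pow]
    ext p
    simp
  rw [h4] at h3
  set V := Submodule.span ℂ {g | ∃ m n, fourierCoef f m n ≠ 0 ∧ g = chi m n}
  have h5 := V.smul_mem (((∫ q, c q ^ k ∂haarT2)⁻¹ : ℝ) : ℂ) h3
  rw [Complex.coe_smul] at h5
  exact h5

/-- The frequencies `(m, n)` with `0 ≤ m + α n`. -/
def halfPlane (α : ℝ) : AddSubmonoid (ℤ × ℤ) where
  carrier := {k | 0 ≤ (k.1 : ℝ) + α * k.2}
  add_mem' := by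
    intro a b ha hb
    simp only [Set.mem_ofPred_eq, Prod.fst_add, Prod.snd_add] at *
    push_cast
    linarith
  zero_mem' := by simp

theorem mem_halfPlane {α : ℝ} {k : ℤ × ℤ} : k ∈ halfPlane α ↔ 0 ≤ (k.1 : ℝ) + α * k.2 := Iff.rfl

/-- The uniform algebra `𝒜_α`, presented as the closure of its trigonometric polynomials. -/
def algA (α : ℝ) : Subalgebra ℂ C(Circle × Circle, ℂ) := (trigPoly (halfPlane α)).topologicalClosure

theorem mem_Aset {α : ℝ} {f : C(Circle × Circle, ℂ)} : f ∈ Aset α ↔ f ∈ algA α := by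
  constructor
  · intro hf
    have h := mem_closure_span_spectrum f
    refine closure_mono ?_ h
    change _ ⊆ SetLike.coe (Subalgebra.toSubmodule (trigPoly (halfPlane α)))
    rw [trigPoly_toSubmodule]
    refine Submodule.span_mono ?_
    rintro _ ⟨m, n, hmn, rfl⟩
    refine ⟨(m, n), ?_, rfl⟩
    by_contra h0
    exact hmn (hf m n (not_le.mp h0))
  · intro hf m n hmn
    rw [← fourierL_apply]
    have hcl : IsClosed {g : C(Circle × Circle, ℂ) | fourierL m n g = 0} :=
      isClosed_eq (fourierL m n).continuous continuous_const
    refine closure_minimal ?_ hcl hf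
    change SetLike.coe (Subalgebra.toSubmodule (trigPoly (halfPlane α))) ⊆ _
    rw [trigPoly_toSubmodule]
    have : Submodule.span ℂ ((fun k : ℤ × ℤ => chi k.1 k.2) '' (halfPlane α)) ≤
        LinearMap.ker (fourierL m n).toLinearMap := by
      rw [Submodule.span_le]
      rintro _ ⟨⟨k, l⟩, hk, rfl⟩
      change fourierCoef (chi k l) m n = 0
      refine fourierCoef_chi_ne fun h => ?_
      rw [h] at hk
      exact absurd (mem_halfPlane.mp hk) (not_le.mpr hmn)
    exact this

theorem chi_mem_algA {α : ℝ} {m n : ℤ} (h : 0 ≤ (m : ℝ) + α * n) : chi m n ∈ algA α :=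
  Subalgebra.le_topologicalClosure _ (chi_mem_trigPoly (k := (m, n)) h)

/-! ### Holomorphic extension along the flow -/

/-- The flow `x ↦ (z e^{-it}, w e^{-iβt})` on the torus, whose orbits carry the analytic structure
of `𝒜_β`. -/
def fl (β : ℝ) (x : Circle × Circle) (t : ℝ) : Circle × Circle :=
  (x.1 * Circle.exp (-t), x.2 * Circle.exp (-(β * t)))

theorem continuous_fl (β : ℝ) : Continuous fun q : (Circle × Circle) × ℝ => fl β q.1 q.2 := by
  unfold fl; fun_prop

theorem fl_zero (β : ℝ) (x : Circle × Circle) : fl β x 0 = x := by simp [fl]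

theorem fl_fl (β : ℝ) (x : Circle × Circle) (s t : ℝ) : fl β (fl β x s) t = fl β x (s + t) := by
  simp only [fl, mul_assoc, ← Circle.exp_add]
  congr 3 <;> ring

theorem fl_eq_mul (β : ℝ) (x : Circle × Circle) (t : ℝ) : fl β x t = x * fl β 1 t := by
  simp [fl, Prod.mul_def]

theorem chi_fl_one (β : ℝ) (m n : ℤ) (t : ℝ) :
    chi m n (fl β 1 t) = Complex.exp (-((((m : ℝ) + β * n) * t : ℝ) * Complex.I)) := by
  simp only [chi_apply, fl, Prod.fst_one, Prod.snd_one, one_mul, ← Circle.exp_intCast_mul,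
    ← Circle.exp_add, Circle.coe_exp]
  congr 1
  push_cast
  ring

theorem isOpen_halfPlane_re : IsOpen {z : ℂ | 0 < z.re} :=
  isOpen_lt continuous_const Complex.continuous_re

/-- Pairs `(f, E)` where, for each `x`, the function `E (x, ·)` is continuous and bounded on `ℂ`,
holomorphic on the right half-plane, and equal to `f` along the flow line of `x` on the imaginary
axis. It is convenient to extend `E (x, ·)` to the left half-plane independently of the
real part. -/
def extPairs (β : ℝ) : Subalgebra ℂ
    (C(Circle × Circle, ℂ) × BoundedContinuousFunction ((Circle × Circle) × ℂ) ℂ) where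
  carrier := {P | (∀ (x : Circle × Circle) (z : ℂ), z.re ≤ 0 → P.2 (x, z) = P.1 (fl β x z.im)) ∧
    ∀ x : Circle × Circle, DifferentiableOn ℂ (fun z : ℂ => P.2 (x, z)) {z | 0 < z.re}}
  mul_mem' := by
    rintro P Q ⟨hP, hP'⟩ ⟨hQ, hQ'⟩
    exact ⟨fun x z hz => by simp [hP x z hz, hQ x z hz], fun x => (hP' x).mul (hQ' x)⟩
  add_mem' := by
    rintro P Q ⟨hP, hP'⟩ ⟨hQ, hQ'⟩
    exact ⟨fun x z hz => by simp [hP x z hz, hQ x z hz], fun x => (hP' x).add (hQ' x)⟩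
  algebraMap_mem' c := ⟨fun x z hz => rfl, fun x => differentiableOn_const c⟩

theorem extPairs_bound {β : ℝ} {f : C(Circle × Circle, ℂ)}
    {E : BoundedContinuousFunction ((Circle × Circle) × ℂ) ℂ} (h : (f, E) ∈ extPairs β) :
    ‖E‖ ≤ ‖f‖ := by
  obtain ⟨h1, h2⟩ := h
  have h3 : ∀ x (z : ℂ), z.re ≤ 0 → ‖E (x, z)‖ ≤ ‖f‖ := fun x z hz => by
    have := h1 x z hz
    dsimp only at this
    rw [this]
    exact f.norm_coe_le_norm _
  refine (BoundedContinuousFunction.norm_le (norm_nonneg _)).mpr ?_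
  rintro ⟨x, z⟩
  rcases le_total z.re 0 with hz | hz
  · exact h3 x z hz
  · exact halfPlane_bound (F := fun z => E (x, z)) (by fun_prop) (h2 x)
      (fun w => E.norm_coe_le_norm _) (fun w hw => h3 x w hw.le) hz

theorem extPairs_unique {β : ℝ} {f : C(Circle × Circle, ℂ)}
    {E E' : BoundedContinuousFunction ((Circle × Circle) × ℂ) ℂ} (h : (f, E) ∈ extPairs β)
    (h' : (f, E') ∈ extPairs β) : E = E' := by
  have h1 := sub_mem h h'
  rw [Prod.mk_sub_mk, sub_self] at h1
  have h2 := extPairs_bound h1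
  rw [norm_zero] at h2
  exact sub_eq_zero.mp (norm_le_zero_iff.mp h2)

theorem isClosed_extPairs (β : ℝ) : IsClosed (extPairs β : Set
    (C(Circle × Circle, ℂ) × BoundedContinuousFunction ((Circle × Circle) × ℂ) ℂ)) := by
  refine IsSeqClosed.isClosed fun P Q hP hQ => ⟨fun x z hz => ?_, fun x => ?_⟩
  · have h1 : Filter.Tendsto (fun k => (P k).2 (x, z)) Filter.atTop (nhds (Q.2 (x, z))) :=
      ((BoundedContinuousFunction.evalCLM ℂ (x, z)).continuous.tendsto _).comp
        ((continuous_snd.tendsto _).comp hQ)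
    have h2 : Filter.Tendsto (fun k => (P k).1 (fl β x z.im)) Filter.atTop
        (nhds (Q.1 (fl β x z.im))) :=
      ((ContinuousMap.evalCLM ℂ (fl β x z.im)).continuous.tendsto _).comp
        ((continuous_fst.tendsto _).comp hQ)
    refine tendsto_nhds_unique h1 (h2.congr fun k => ((hP k).1 x z hz).symm)
  · have h1 : Filter.Tendsto (fun k => (P k).2) Filter.atTop (nhds Q.2) :=
      (continuous_snd.tendsto _).comp hQ
    rw [BoundedContinuousFunction.tendsto_iff_tendstoUniformly] at h1
    have h2 := (h1.comp fun z : ℂ => (x, z)).tendstoUniformlyOn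
      (s := {z : ℂ | 0 < z.re})
    exact h2.tendstoLocallyUniformlyOn.differentiableOn
      (Filter.Eventually.of_forall fun k => (hP k).2 x) isOpen_halfPlane_re

theorem exists_extPairs_chi {β : ℝ} {m n : ℤ} (h : 0 ≤ (m : ℝ) + β * n) :
    ∃ E, (chi m n, E) ∈ extPairs β := by
  have hcont : Continuous fun q : (Circle × Circle) × ℂ => chi m n q.1 *
      Complex.exp (-((((m : ℝ) + β * n : ℝ) : ℂ) *
        ((max q.2.re 0 : ℝ) + (q.2.im : ℂ) * Complex.I))) := by fun_prop
  refine ⟨BoundedContinuousFunction.ofNormedAddCommGroup _ hcont 1 ?_, ?_, ?_⟩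
  · rintro ⟨x, z⟩
    rw [norm_mul, norm_chi_apply, one_mul, Complex.norm_exp, Real.exp_le_one_iff]
    simp
    positivity
  · intro x z hz
    simp only [BoundedContinuousFunction.coe_ofNormedAddCommGroup]
    rw [fl_eq_mul, chi_apply_mul, chi_fl_one, max_eq_right hz]
    congr 2
    push_cast
    ring
  · intro x
    have : DifferentiableOn ℂ (fun z : ℂ => chi m n x *
        Complex.exp (-((((m : ℝ) + β * n : ℝ) : ℂ) * z))) {z | 0 < z.re} := by fun_prop
    refine this.congr fun z hz => ?_
    simp only [BoundedContinuousFunction.coe_ofNormedAddCommGroup]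
    rw [max_eq_left (le_of_lt hz), Complex.re_add_im]

/-- Every element of `𝒜_β` extends holomorphically along the flow. The extension is isometric, so
the functions which extend form a closed algebra, and that algebra contains the characters. -/
theorem exists_extPairs {β : ℝ} {f : C(Circle × Circle, ℂ)} (hf : f ∈ algA β) :
    ∃ E, (f, E) ∈ extPairs β := by
  let S := (extPairs β).toSubmodule
  have hS : IsClosed (SetLike.coe S) := isClosed_extPairs β
  let π : S →ₗ[ℂ] C(Circle × Circle, ℂ) := (LinearMap.fst ℂ _ _).comp S.subtype
  have hπ : Isometry π := by
    refine AddMonoidHomClass.isometry_of_norm _ ?_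
    rintro ⟨⟨f, E⟩, h⟩
    have := extPairs_bound h
    change ‖f‖ = max ‖f‖ ‖E‖
    exact (max_eq_left this).symm
  have : CompleteSpace S := hS.completeSpace_coe
  have hcl : IsClosed (Set.range π) := hπ.isClosedEmbedding.isClosed_range
  have hle : trigPoly (halfPlane β) ≤ (extPairs β).map (AlgHom.fst ℂ _ _) := by
    refine Algebra.adjoin_le ?_
    rintro _ ⟨k, hk, rfl⟩
    obtain ⟨E, hE⟩ := exists_extPairs_chi (mem_halfPlane.mp hk)
    exact ⟨_, hE, rfl⟩
  have hsub : (trigPoly (halfPlane β) : Set C(Circle × Circle, ℂ)) ⊆ Set.range π := by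
    intro g hg
    obtain ⟨P, hP, rfl⟩ := hle hg
    exact ⟨⟨P, hP⟩, rfl⟩
  obtain ⟨⟨⟨f', E⟩, hE⟩, rfl⟩ := closure_minimal hsub hcl hf
  exact ⟨E, hE⟩

theorem extPairs_shift {β : ℝ} {f : C(Circle × Circle, ℂ)}
    {E : BoundedContinuousFunction ((Circle × Circle) × ℂ) ℂ} (h : (f, E) ∈ extPairs β)
    (x : Circle × Circle) (t : ℝ) {z : ℂ} (hz : 0 ≤ z.re) :
    E (fl β x t, z) = E (x, z + t * Complex.I) := by
  obtain ⟨h1, h2⟩ := h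
  have hd : DifferentiableOn ℂ (fun z => E (fl β x t, z) - E (x, z + t * Complex.I))
      {z | 0 < z.re} := by
    refine (h2 _).sub ((h2 x).comp (g := fun z => E (x, z)) (f := fun z => z + t * Complex.I)
      (by fun_prop) ?_)
    intro z hz
    simpa using hz
  have := halfPlane_bound (F := fun z => E (fl β x t, z) - E (x, z + t * Complex.I))
    (K := ‖E‖ + ‖E‖) (C := 0) (by fun_prop) hd
    (fun z => (norm_sub_le _ _).trans
      (add_le_add (E.norm_coe_le_norm _) (E.norm_coe_le_norm _)))
    (fun z hz => by
      have e1 := h1 (fl β x t) z hz.le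
      have e2 := h1 x (z + t * Complex.I) (by simp [hz])
      dsimp only at e1 e2
      rw [e1, e2, fl_fl]
      simp [add_comm]) hz
  exact sub_eq_zero.mp (norm_le_zero_iff.mp this)

/-! ### Multiplicative families of unimodular functions -/

/-- There are frequencies of arbitrarily small positive weight. -/
theorem exists_small_weight {α : ℝ} (hα : Irrational α) {ε : ℝ} (hε : 0 < ε) :
    ∃ t : ℤ × ℤ, 0 < (t.1 : ℝ) + α * t.2 ∧ (t.1 : ℝ) + α * t.2 < ε := by
  have hd : Dense (AddSubgroup.closure {α, 1} : Set ℝ) :=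
    dense_addSubgroupClosure_pair_iff.mpr (by simpa using hα)
  obtain ⟨y, hy, h0, h1⟩ := hd.exists_between hε
  obtain ⟨n, m, rfl⟩ := AddSubgroup.mem_closure_pair.mp hy
  refine ⟨(m, n), ?_, ?_⟩ <;> simp only [zsmul_eq_mul] at h0 h1 <;> simp only <;> linarith

/-- Kronecker's theorem: for irrational `β` the orbits of the flow are dense. -/
theorem dense_orbit {β : ℝ} (hβ : Irrational β) (x : Circle × Circle) :
    Dense (Set.range (fl β x)) := by
  have hd : Dense (AddSubgroup.closure {2 * Real.pi * β, 2 * Real.pi} : Set ℝ) := by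
    rw [dense_addSubgroupClosure_pair_iff, mul_div_cancel_left₀ _ Real.two_pi_pos.ne']
    exact hβ
  let ψ : ℝ × ℝ → Circle × Circle := fun r =>
    (x.1 * Circle.exp (-r.1), x.2 * Circle.exp (-(β * r.1) + r.2))
  have hψ : Continuous ψ := by fun_prop
  have hsurj : Function.Surjective ψ := by
    rintro ⟨z, w⟩
    obtain ⟨a, ha⟩ := Circle.exp_surjective (x.1⁻¹ * z)
    obtain ⟨b, hb⟩ := Circle.exp_surjective (x.2⁻¹ * w)
    refine ⟨(-a, b - β * a), ?_⟩
    have e : -(β * -a) + (b - β * a) = b := by ring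
    simp only [ψ, neg_neg, e, ha, hb, mul_inv_cancel_left]
  refine (hsurj.denseRange.dense_image hψ ((dense_univ (X := ℝ)).prod hd)).mono ?_
  rintro _ ⟨⟨t, d⟩, ⟨-, hd⟩, rfl⟩
  obtain ⟨k, j, rfl⟩ := AddSubgroup.mem_closure_pair.mp hd
  refine ⟨t - k * (2 * Real.pi), ?_⟩
  simp only [fl, ψ, zsmul_eq_mul]
  have e1 : -(t - k * (2 * Real.pi)) = -t + k * (2 * Real.pi) := by ring
  have e2 : -(β * t) + (k * (2 * Real.pi * β) + j * (2 * Real.pi)) =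
    -(β * (t - k * (2 * Real.pi))) + j * (2 * Real.pi) := by ring
  rw [e1, e2, Circle.exp_eq_exp.mpr ⟨k, rfl⟩, Circle.exp_eq_exp.mpr ⟨j, rfl⟩]

/-- A unimodular element of `𝒜_β` with constant frequency along the flow is a multiple of a
character. -/
theorem eq_smul_chi {β a : ℝ} (hβ : Irrational β) {f : C(Circle × Circle, ℂ)} (hf : f ∈ algA β)
    (h1 : ∀ p, ‖f p‖ = 1)
    (hfl : ∀ x t, f (fl β x t) = Complex.exp (-((a * t : ℝ) * Complex.I)) * f x) :
    ∃ (c : Circle) (m n : ℤ), 0 ≤ (m : ℝ) + β * n ∧ f = (c : ℂ) • chi m n := by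
  have key : ∀ m n, fourierCoef f m n ≠ 0 → (m : ℝ) + β * n = a := by
    intro m n hmn
    have h2 : ∀ t : ℝ, Complex.exp (-((a * t : ℝ) * Complex.I)) =
        Complex.exp (-((((m : ℝ) + β * n) * t : ℝ) * Complex.I)) := by
      intro t
      have h3 := fourierCoef_translate f m n (fl β 1 t)
      simp only [← fl_eq_mul, hfl, mul_assoc] at h3
      rw [integral_const_mul, chi_fl_one] at h3
      exact mul_right_cancel₀ hmn h3
    by_contra hne
    have h4 : a - (m + β * n) ≠ 0 := sub_ne_zero.mpr (Ne.symm hne)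
    have h5 := h2 (Real.pi / (a - (m + β * n)))
    have h6 : Complex.exp (-((a * (Real.pi / (a - (m + β * n))) : ℝ) * Complex.I) -
        -((((m : ℝ) + β * n) * (Real.pi / (a - (m + β * n))) : ℝ) * Complex.I)) = 1 := by
      rw [Complex.exp_sub, h5, div_self (Complex.exp_ne_zero _)]
    have h7 : (-((a * (Real.pi / (a - (m + β * n))) : ℝ) * Complex.I) -
        -((((m : ℝ) + β * n) * (Real.pi / (a - (m + β * n))) : ℝ) * Complex.I) : ℂ) =
        -(Real.pi * Complex.I) := by
      have : a * (Real.pi / (a - (m + β * n))) - ((m : ℝ) + β * n) *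
          (Real.pi / (a - (m + β * n))) = Real.pi := by field_simp
      have this' := congrArg (fun r : ℝ => (r : ℂ)) this
      push_cast at this' ⊢
      linear_combination -Complex.I * this'
    rw [h7, Complex.exp_neg, Complex.exp_pi_mul_I] at h6
    norm_num at h6
  have hspan := mem_closure_span_spectrum f
  by_cases hex : ∃ m n, fourierCoef f m n ≠ 0
  · obtain ⟨m, n, hmn⟩ := hex
    have hle : Submodule.span ℂ {g | ∃ m n, fourierCoef f m n ≠ 0 ∧ g = chi m n} ≤
        Submodule.span ℂ {chi m n} := by
      refine Submodule.span_mono ?_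
      rintro _ ⟨m', n', h', rfl⟩
      have e : ((m - m' : ℤ) : ℝ) + β * (n - n' : ℤ) = 0 := by
        push_cast
        linarith [key m n hmn, key m' n' h']
      have hn : n - n' = 0 := by
        by_contra hn
        have hn' : ((n - n' : ℤ) : ℝ) ≠ 0 := by exact_mod_cast hn
        refine hβ ⟨-(m - m' : ℤ) / (n - n' : ℤ), ?_⟩
        push_cast at e hn' ⊢
        field_simp
        linarith
      rw [hn, Int.cast_zero, mul_zero, add_zero] at e
      have hm : m - m' = 0 := by exact_mod_cast e
      rw [Set.mem_singleton_iff, show m' = m by omega, show n' = n by omega]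
    have hmem : f ∈ Submodule.span ℂ {chi m n} := by
      have hcl : IsClosed (SetLike.coe (Submodule.span ℂ {chi m n})) :=
        Submodule.closed_of_finiteDimensional _
      exact closure_minimal hle hcl hspan
    obtain ⟨c, hc⟩ := Submodule.mem_span_singleton.mp hmem
    have hcn : ‖c‖ = 1 := by
      have := h1 1
      rw [← hc, ContinuousMap.smul_apply, smul_eq_mul, norm_mul, norm_chi_apply, mul_one] at this
      exact this
    refine ⟨⟨c, mem_sphere_zero_iff_norm.mpr hcn⟩, m, n, ?_, hc.symm⟩
    by_contra! hneg
    exact hmn (mem_Aset.mpr hf m n hneg)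
  · push Not at hex
    exfalso
    have hset : {g | ∃ m n, fourierCoef f m n ≠ 0 ∧ g = chi m n} = ∅ := by
      ext g
      simp [hex]
    rw [hset, Submodule.span_empty] at hspan
    have hcl : IsClosed (SetLike.coe (⊥ : Submodule ℂ C(Circle × Circle, ℂ))) :=
      Submodule.closed_of_finiteDimensional _
    have h0 : f ∈ (⊥ : Submodule ℂ C(Circle × Circle, ℂ)) := closure_minimal le_rfl hcl hspan
    have := h1 1
    rw [(Submodule.mem_bot ℂ).mp h0] at this
    simp at this

/-- A multiplicative family in `𝒜_β` of unimodular functions indexed by the frequencies of positive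
weight extends without zeros. A zero of one member would be a zero of all of them, hence a zero of
arbitrarily high order of each. -/
theorem ext_ne_zero {α β : ℝ} (hα : Irrational α) {g : ℤ × ℤ → C(Circle × Circle, ℂ)}
    {E : ℤ × ℤ → BoundedContinuousFunction ((Circle × Circle) × ℂ) ℂ}
    (hE : ∀ s : ℤ × ℤ, 0 < (s.1 : ℝ) + α * s.2 → (g s, E s) ∈ extPairs β)
    (hg : ∀ s : ℤ × ℤ, 0 < (s.1 : ℝ) + α * s.2 → ∀ p, ‖g s p‖ = 1)
    (hmul : ∀ s t : ℤ × ℤ, 0 < (s.1 : ℝ) + α * s.2 → 0 < (t.1 : ℝ) + α * t.2 →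
      E (s + t) = E s * E t)
    {s : ℤ × ℤ} (hs : 0 < (s.1 : ℝ) + α * s.2) (x : Circle × Circle) {a : ℂ} (ha : 0 < a.re) :
    E s (x, a) ≠ 0 := by
  intro h0
  have hwt : ∀ (t : ℤ × ℤ) (k : ℕ), (((k • t).1 : ℤ) : ℝ) + α * ((k • t).2 : ℤ) =
      k * ((t.1 : ℝ) + α * t.2) := by
    intro t k
    simp
    ring
  have hpow : ∀ t : ℤ × ℤ, 0 < (t.1 : ℝ) + α * t.2 → ∀ k : ℕ,
      E ((k + 1) • t) = E t ^ (k + 1) := by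
    intro t ht k
    induction k with
    | zero => simp
    | succ k ih =>
      rw [succ_nsmul, hmul _ _ (by rw [hwt]; positivity) ht, ih, pow_succ _ (k + 1)]
  have hall : ∀ t : ℤ × ℤ, 0 < (t.1 : ℝ) + α * t.2 → E t (x, a) = 0 := by
    intro t ht
    obtain ⟨N, hN⟩ := exists_nat_gt (((s.1 : ℝ) + α * s.2) / ((t.1 : ℝ) + α * t.2))
    rw [div_lt_iff₀ ht] at hN
    have hp : 0 < ((((N + 1) • t - s).1 : ℤ) : ℝ) + α * (((N + 1) • t - s).2 : ℤ) := by
      have := hwt t (N + 1)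
      rw [Prod.fst_sub, Prod.snd_sub]
      push_cast at this ⊢
      linarith
    have h1 := hmul s _ hs hp
    rw [add_sub_cancel, hpow t ht] at h1
    have h2 := DFunLike.congr_fun h1 (x, a)
    simp only [BoundedContinuousFunction.coe_pow, Pi.pow_apply,
      BoundedContinuousFunction.coe_mul, Pi.mul_apply, h0, zero_mul] at h2
    exact pow_eq_zero_iff (Nat.succ_ne_zero N) |>.mp h2
  have hle : ∀ t : ℤ × ℤ, 0 < (t.1 : ℝ) + α * t.2 → ∀ q, ‖E t q‖ ≤ 1 := by
    intro t ht q
    refine ((E t).norm_coe_le_norm q).trans ((extPairs_bound (hE t ht)).trans ?_)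
    exact (ContinuousMap.norm_le _ zero_le_one).mpr fun p => (hg t ht p).le
  have hzero : ∀ z : ℂ, 0 < z.re → E s (x, z) = 0 := by
    intro z hz
    have hden : 0 < ‖z + (starRingEnd ℂ) a‖ := by
      refine norm_pos_iff.mpr fun h => ?_
      have := congrArg Complex.re h
      simp at this
      linarith
    set r := ‖z - a‖ / ‖z + (starRingEnd ℂ) a‖ with hr
    have hr1 : r < 1 := by
      rw [hr, div_lt_one hden, ← sq_lt_sq₀ (norm_nonneg _) (norm_nonneg _), ← Complex.normSq_eq_norm_sq,
        ← Complex.normSq_eq_norm_sq, Complex.normSq_apply, Complex.normSq_apply]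
      simp
      nlinarith [mul_pos ha hz]
    have hr0 : 0 ≤ r := by positivity
    have hk : ∀ k : ℕ, ‖E s (x, z)‖ ≤ r ^ (k + 1) := by
      intro k
      obtain ⟨t, ht, hts⟩ := exists_small_weight hα
        (ε := ((s.1 : ℝ) + α * s.2) / (k + 1)) (by positivity)
      rw [lt_div_iff₀ (by positivity)] at hts
      have hp : 0 < (((s - (k + 1) • t).1 : ℤ) : ℝ) + α * ((s - (k + 1) • t).2 : ℤ) := by
        have := hwt t (k + 1)
        rw [Prod.fst_sub, Prod.snd_sub]
        push_cast at this ⊢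
        linarith
      have h1 := hmul _ ((k + 1) • t) hp (by rw [hwt]; positivity)
      rw [sub_add_cancel, hpow t ht] at h1
      have h2 := DFunLike.congr_fun h1 (x, z)
      simp only [BoundedContinuousFunction.coe_pow, Pi.pow_apply,
        BoundedContinuousFunction.coe_mul, Pi.mul_apply] at h2
      have h3 : ‖E t (x, z)‖ ≤ r := by
        rw [hr, le_div_iff₀ hden]
        exact halfPlane_schwarz (F := fun z => E t (x, z)) ((hE t ht).2 x)
          (fun w _ => hle t ht _) ha hz (hall t ht)
      rw [h2, norm_mul, norm_pow]
      calc _ ≤ 1 * r ^ (k + 1) := by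
            gcongr
            exact hle _ hp _
        _ = _ := one_mul _
    have hlim := (tendsto_pow_atTop_nhds_zero_of_lt_one hr0 hr1).comp (Filter.tendsto_add_atTop_nat 1)
    exact norm_le_zero_iff.mp (ge_of_tendsto' hlim hk)
  have h1 : Filter.Tendsto (fun k : ℕ => E s (x, (((1 / ((k : ℝ) + 1) : ℝ)) : ℂ))) Filter.atTop
      (nhds (E s (x, ((0 : ℝ) : ℂ)))) := by
    have hc : Continuous fun r : ℝ => E s (x, (r : ℂ)) := by fun_prop
    exact (hc.tendsto 0).comp tendsto_one_div_add_atTop_nhds_zero_nat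
  have h2 : E s (x, ((0 : ℝ) : ℂ)) = 0 := by
    refine tendsto_nhds_unique h1 (tendsto_const_nhds.congr fun k => (hzero _ ?_).symm)
    rw [Complex.ofReal_re]
    positivity
  have h3 := (hE s hs).1 x ((0 : ℝ) : ℂ) (by simp)
  dsimp only at h3
  rw [h2] at h3
  have h4 := hg s hs (fl β x ((0 : ℝ) : ℂ).im)
  rw [← h3, norm_zero] at h4
  exact zero_ne_one h4

/-- A multiplicative family in `𝒜_β` of unimodular functions indexed by the frequencies of positive
weight consists of multiples of characters: extremality of `-log |E|` on the line `re z = 1` forces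
the extension along one orbit to be an exponential, and the orbit is dense. -/
theorem family_eq_smul_chi {α β : ℝ} (hα : Irrational α) (hβ : Irrational β)
    {g : ℤ × ℤ → C(Circle × Circle, ℂ)}
    (hA : ∀ s : ℤ × ℤ, 0 < (s.1 : ℝ) + α * s.2 → g s ∈ algA β)
    (hg : ∀ s : ℤ × ℤ, 0 < (s.1 : ℝ) + α * s.2 → ∀ p, ‖g s p‖ = 1)
    (hmul : ∀ s t : ℤ × ℤ, 0 < (s.1 : ℝ) + α * s.2 → 0 < (t.1 : ℝ) + α * t.2 →
      g (s + t) = g s * g t)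
    {s : ℤ × ℤ} (hs : 0 < (s.1 : ℝ) + α * s.2) :
    ∃ (c : Circle) (m n : ℤ), 0 ≤ (m : ℝ) + β * n ∧ g s = (c : ℂ) • chi m n := by
  have hex : ∀ s : ℤ × ℤ, ∃ E, 0 < (s.1 : ℝ) + α * s.2 → (g s, E) ∈ extPairs β := by
    intro s
    by_cases h : 0 < (s.1 : ℝ) + α * s.2
    · obtain ⟨E, hE⟩ := exists_extPairs (hA s h)
      exact ⟨E, fun _ => hE⟩
    · exact ⟨0, fun h' => absurd h' h⟩
  choose E hE using hex
  have hEmul : ∀ s t : ℤ × ℤ, 0 < (s.1 : ℝ) + α * s.2 → 0 < (t.1 : ℝ) + α * t.2 →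
      E (s + t) = E s * E t := by
    intro s t hs ht
    refine extPairs_unique (hE (s + t) ?_) ?_
    · rw [Prod.fst_add, Prod.snd_add]
      push_cast
      linarith
    · rw [hmul s t hs ht]
      exact mul_mem (hE s hs) (hE t ht)
  have hne : ∀ x (z : ℂ), 0 < z.re → E s (x, z) ≠ 0 := fun x z hz =>
    ext_ne_zero hα hE hg hEmul hs x hz
  have hEg : ∀ x (z : ℂ), z.re ≤ 0 → E s (x, z) = g s (fl β x z.im) := (hE s hs).1
  have hbd : ∀ x (z : ℂ), z.re = 0 → ‖E s (x, z)‖ = 1 := by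
    intro x z hz
    rw [hEg x z hz.le, hg s hs]
  have hle : ∀ q, ‖E s q‖ ≤ 1 := by
    intro q
    refine ((E s).norm_coe_le_norm q).trans ((extPairs_bound (hE s hs)).trans ?_)
    exact (ContinuousMap.norm_le _ zero_le_one).mpr fun p => (hg s hs p).le
  have hshift : ∀ x (z : ℂ), 0 ≤ z.re → E s (x, z) = E s (fl β x z.im, (z.re : ℂ)) := by
    intro x z hz
    rw [extPairs_shift (hE s hs) x z.im (by simpa using hz), Complex.re_add_im]
  obtain ⟨x, -, hx⟩ := isCompact_univ.exists_isMaxOn Set.univ_nonempty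
    (f := fun x : Circle × Circle => -Real.log ‖E s (x, 1)‖) (by
      refine Continuous.continuousOn (Continuous.neg (Continuous.log (by fun_prop) fun x => ?_))
      exact norm_ne_zero_iff.mpr (hne x 1 (by simp)))
  obtain ⟨y, hy1, hy⟩ := ((isCompact_univ (X := Circle × Circle)).prod
    (isCompact_Icc (a := (0 : ℝ)) (b := 1))).exists_isMinOn ⟨(1, 0), by simp⟩
    (f := fun q : (Circle × Circle) × ℝ => ‖E s (q.1, (q.2 : ℂ))‖) (by fun_prop)
  have hδ : 0 < ‖E s (y.1, (y.2 : ℂ))‖ := by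
    rcases hy1.2.1.eq_or_lt with h | h
    · rw [hbd _ _ (by simp [← h])]
      exact one_pos
    · exact norm_pos_iff.mpr (hne _ _ (by simpa using h))
  obtain ⟨c, hc⟩ := halfPlane_exp_rigid (F := fun z => E s (x, z)) (by fun_prop) ((hE s hs).2 x)
    (hne x) (fun z _ => hle _) (hbd x) hδ
    (fun z h0 h1 => by
      rw [hshift x z h0]
      exact hy (show (fl β x z.im, z.re) ∈ _ from ⟨trivial, h0, h1⟩))
    (a := -Real.log ‖E s (x, 1)‖)
    (fun z hz => by
      rw [hshift x z (by simp [hz]), hz, Complex.ofReal_one]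
      exact hx (Set.mem_univ _)) rfl
  set a := -Real.log ‖E s (x, 1)‖
  have horb : ∀ t : ℝ, g s (fl β x t) = c * Complex.exp (-((a * t : ℝ) * Complex.I)) := by
    intro t
    have h1 := hEg x (t * Complex.I) (by simp)
    have h2 := hc (t * Complex.I) (by simp)
    rw [h1] at h2
    simp only [Complex.mul_im, Complex.ofReal_re, Complex.I_im, mul_one, Complex.ofReal_im,
      Complex.I_re, mul_zero, add_zero] at h2
    rw [h2]
    push_cast
    ring_nf
  refine eq_smul_chi (a := a) hβ (hA s hs) (hg s hs) fun p t => ?_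
  have hcl : IsClosed {p | g s (fl β p t) = Complex.exp (-((a * t : ℝ) * Complex.I)) * g s p} := by
    refine isClosed_eq ?_ (by fun_prop)
    exact (g s).continuous.comp ((continuous_fl β).comp (by fun_prop : Continuous fun p => (p, t)))
  have hsub : Set.range (fl β x) ⊆
      {p | g s (fl β p t) = Complex.exp (-((a * t : ℝ) * Complex.I)) * g s p} := by
    rintro _ ⟨u, rfl⟩
    change g s (fl β (fl β x u) t) = _ * g s (fl β x u)
    rw [fl_fl, horb, horb, mul_left_comm, ← Complex.exp_add]
    congr 2
    push_cast
    ring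
  exact closure_minimal hsub hcl (dense_orbit hβ x p)

/-! ### Monomial maps, algebra isomorphisms and peak points -/

/-- The map `(z, w) ↦ (c₁ z^{m₁} w^{n₁}, c₂ z^{m₂} w^{n₂})` of the torus. -/
def monoMap (c₁ c₂ : Circle) (m₁ n₁ m₂ n₂ : ℤ) : C(Circle × Circle, Circle × Circle) :=
  ⟨fun p => (c₁ * p.1 ^ m₁ * p.2 ^ n₁, c₂ * p.1 ^ m₂ * p.2 ^ n₂), by
    have h1 (k : ℤ) : Continuous fun p : Circle × Circle => p.1 ^ k :=
      (continuous_zpow k).comp continuous_fst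
    have h2 (k : ℤ) : Continuous fun p : Circle × Circle => p.2 ^ k :=
      (continuous_zpow k).comp continuous_snd
    exact ((continuous_const.mul (h1 _)).mul (h2 _)).prodMk
      ((continuous_const.mul (h1 _)).mul (h2 _))⟩

theorem monoMap_apply (c₁ c₂ : Circle) (m₁ n₁ m₂ n₂ : ℤ) (p : Circle × Circle) :
    monoMap c₁ c₂ m₁ n₁ m₂ n₂ p = (c₁ * p.1 ^ m₁ * p.2 ^ n₁, c₂ * p.1 ^ m₂ * p.2 ^ n₂) := rfl

theorem chi_comp_monoMap (c₁ c₂ : Circle) (m₁ n₁ m₂ n₂ m n : ℤ) :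
    (chi m n).comp (monoMap c₁ c₂ m₁ n₁ m₂ n₂) =
      ((c₁ ^ m * c₂ ^ n : Circle) : ℂ) • chi (m * m₁ + n * m₂) (m * n₁ + n * n₂) := by
  ext ⟨z, w⟩
  obtain ⟨a, rfl⟩ := Circle.exp_surjective c₁
  obtain ⟨b, rfl⟩ := Circle.exp_surjective c₂
  obtain ⟨u, rfl⟩ := Circle.exp_surjective z
  obtain ⟨v, rfl⟩ := Circle.exp_surjective w
  simp only [ContinuousMap.comp_apply, monoMap_apply, ContinuousMap.smul_apply, chi_apply,
    smul_eq_mul, ← Circle.coe_mul, ← Circle.exp_intCast_mul, ← Circle.exp_add]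
  congr 2
  push_cast
  ring

theorem fourierCoef_chi_self (m n : ℤ) : fourierCoef (chi m n) m n = 1 := by
  unfold fourierCoef
  simp only [← ContinuousMap.mul_apply, chi_mul, add_neg_cancel, chi_zero]
  simp

theorem chi_injective {c : Circle} {m n m' n' : ℤ} (h : chi m n = (c : ℂ) • chi m' n') :
    m = m' ∧ n = n' := by
  by_contra hne
  have h1 := fourierCoef_chi_self m n
  rw [h, ← fourierL_apply, map_smul, fourierL_apply, fourierCoef_chi_ne, smul_zero] at h1
  · exact zero_ne_one h1
  · rintro h2
    have := Prod.mk_inj.mp h2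
    exact hne ⟨this.1.symm, this.2.symm⟩

theorem weight_nonneg_of_mem {β : ℝ} {c : Circle} {m n : ℤ} (h : (c : ℂ) • chi m n ∈ algA β) :
    0 ≤ (m : ℝ) + β * n := by
  by_contra! hneg
  have h1 := mem_Aset.mpr h m n hneg
  rw [← fourierL_apply, map_smul, fourierL_apply, fourierCoef_chi_self, smul_eq_mul, mul_one] at h1
  exact Circle.coe_ne_zero c h1

theorem comp_monoMap_mem {α β : ℝ} {c₁ c₂ : Circle} {m₁ n₁ m₂ n₂ : ℤ}
    (h : ∀ m n : ℤ, 0 ≤ (m : ℝ) + α * n →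
      0 ≤ ((m * m₁ + n * m₂ : ℤ) : ℝ) + β * (m * n₁ + n * n₂ : ℤ))
    {f : C(Circle × Circle, ℂ)} (hf : f ∈ algA α) :
    f.comp (monoMap c₁ c₂ m₁ n₁ m₂ n₂) ∈ algA β := by
  let T := ContinuousMap.compRightAlgHom ℂ ℂ (monoMap c₁ c₂ m₁ n₁ m₂ n₂)
  have hT : Continuous T := ContinuousMap.continuous_precomp _
  have hcl : IsClosed (T ⁻¹' (algA β)) :=
    (Subalgebra.isClosed_topologicalClosure _).preimage hT
  have hle : trigPoly (halfPlane α) ≤ (algA β).comap T := by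
    refine Algebra.adjoin_le ?_
    rintro _ ⟨⟨m, n⟩, hk, rfl⟩
    change (chi m n).comp _ ∈ algA β
    rw [chi_comp_monoMap]
    exact Subalgebra.smul_mem _ (chi_mem_algA (h m n hk)) _
  exact closure_minimal hle hcl hf

/-- An isometric isomorphism, bundled as an algebra isomorphism. -/
theorem IsIsomIso.exists_algEquiv {α β : ℝ} {Φ : ↥(Aset α) → ↥(Aset β)} (h : IsIsomIso α β Φ) :
    ∃ Ψ : algA α ≃ₐ[ℂ] algA β, (∀ f, ‖Ψ f‖ = ‖f‖) ∧
      ∀ f : ↥(Aset α), (Φ f : C(Circle × Circle, ℂ)) = Ψ ⟨f, mem_Aset.mp f.2⟩ := by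
  obtain ⟨⟨hinj, hsurj⟩, hadd, hsmul, hmul, hnorm⟩ := h
  let L : algA α →ₗ[ℂ] algA β :=
    { toFun := fun f => ⟨Φ ⟨f, mem_Aset.mpr f.2⟩, mem_Aset.mp (Φ _).2⟩
      map_add' := fun f g => Subtype.ext (hadd _ _ _ rfl)
      map_smul' := fun c f => Subtype.ext (hsmul c _ _ rfl) }
  have hLs : Function.Surjective L := by
    intro g
    obtain ⟨f, hf⟩ := hsurj ⟨g, mem_Aset.mpr g.2⟩
    have e : (Φ f : C(Circle × Circle, ℂ)) = g := by rw [hf]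
    exact ⟨⟨f, mem_Aset.mp f.2⟩, Subtype.ext e⟩
  have hLi : Function.Injective L := by
    intro f g hfg
    have e : (L f : C(Circle × Circle, ℂ)) = L g := by rw [hfg]
    have e' := hinj (a₁ := ⟨f, mem_Aset.mpr f.2⟩) (a₂ := ⟨g, mem_Aset.mpr g.2⟩) (Subtype.ext e)
    exact Subtype.ext (Subtype.mk.inj e')
  have hLm : ∀ f g, L (f * g) = L f * L g := fun f g => Subtype.ext (hmul _ _ _ rfl)
  have hL1 : L 1 = 1 := by
    obtain ⟨e, he⟩ := hLs 1
    have := hLm e 1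
    rw [mul_one, he, one_mul] at this
    exact this.symm
  exact ⟨AlgEquiv.ofBijective (AlgHom.ofLinearMap L hL1 hLm) ⟨hLi, hLs⟩,
    fun f => hnorm _, fun f => rfl⟩

theorem norm_one_add_circle (u : Circle) : ‖(1 : ℂ) + u‖ ≤ 2 :=
  (norm_add_le _ _).trans_eq (by rw [Circle.norm_coe, norm_one]; norm_num)

theorem norm_one_add_circle_lt {u : Circle} (h : u ≠ 1) : ‖(1 : ℂ) + u‖ < 2 := by
  have h1 := circle_re_lt h
  have h2 := Circle.normSq_coe u
  rw [← sq_lt_sq₀ (norm_nonneg _) (by norm_num), ← Complex.normSq_eq_norm_sq, Complex.normSq_add, h2]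
  simp
  linarith

/-- Each point of the torus is a peak point of `𝒜_β`. -/
theorem exists_peak {β : ℝ} (hβ : 0 < β) (x : Circle × Circle) :
    ∃ P ∈ algA β, P x = 1 ∧ ∀ y, y ≠ x → ‖P y‖ < 1 := by
  have h1 : chi 1 0 ∈ algA β := chi_mem_algA (by simp)
  have h2 : chi 0 1 ∈ algA β := chi_mem_algA (by simpa using hβ.le)
  refine ⟨(1 / 4 : ℂ) • ((1 + ((x.1⁻¹ : Circle) : ℂ) • chi 1 0) *
    (1 + ((x.2⁻¹ : Circle) : ℂ) • chi 0 1)), ?_, ?_, ?_⟩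
  · refine Subalgebra.smul_mem _ (mul_mem ?_ ?_) _ <;>
    refine add_mem (one_mem _) (Subalgebra.smul_mem _ ?_ _) <;> assumption
  · simp [chi_apply]
    norm_num
  · intro y hy
    have e : ((1 / 4 : ℂ) • ((1 + ((x.1⁻¹ : Circle) : ℂ) • chi 1 0) *
        (1 + ((x.2⁻¹ : Circle) : ℂ) • chi 0 1))) y =
        1 / 4 * ((1 + ((x.1⁻¹ * y.1 : Circle) : ℂ)) * (1 + ((x.2⁻¹ * y.2 : Circle) : ℂ))) := by
      simp [chi_apply]
    rw [e, norm_mul, norm_mul]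
    have a1 := norm_one_add_circle (x.1⁻¹ * y.1)
    have a2 := norm_one_add_circle (x.2⁻¹ * y.2)
    have n1 := norm_nonneg ((1 : ℂ) + ((x.1⁻¹ * y.1 : Circle) : ℂ))
    have n2 := norm_nonneg ((1 : ℂ) + ((x.2⁻¹ * y.2 : Circle) : ℂ))
    have : ‖(1 / 4 : ℂ)‖ = 1 / 4 := by norm_num
    rw [this]
    by_cases hy1 : y.1 = x.1
    · have hy2 : x.2⁻¹ * y.2 ≠ 1 := by
        intro h
        exact hy (Prod.ext hy1 (inv_mul_eq_one.mp h).symm)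
      have := norm_one_add_circle_lt hy2
      nlinarith
    · have hy2 : x.1⁻¹ * y.1 ≠ 1 := by
        intro h
        exact hy1 (inv_mul_eq_one.mp h).symm
      have := norm_one_add_circle_lt hy2
      nlinarith

/-- Isometric isomorphisms preserve unimodular functions, since multiplication by a function `u`
with `‖u‖ ≤ 1` is isometric on `𝒜_β` only when `|u| = 1` at every peak point. -/
theorem norm_map_eq_one {α β : ℝ} (hβ : 0 < β) (Ψ : algA α ≃ₐ[ℂ] algA β)
    (hΨ : ∀ f, ‖Ψ f‖ = ‖f‖) {f : algA α}
    (hf : ∀ p, ‖(f : C(Circle × Circle, ℂ)) p‖ = 1) (x : Circle × Circle) :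
    ‖(Ψ f : C(Circle × Circle, ℂ)) x‖ = 1 := by
  have hle : ∀ y, ‖(Ψ f : C(Circle × Circle, ℂ)) y‖ ≤ 1 := by
    intro y
    refine ((Ψ f : C(Circle × Circle, ℂ)).norm_coe_le_norm y).trans ((hΨ f).trans_le ?_)
    exact (ContinuousMap.norm_le _ zero_le_one).mpr fun p => (hf p).le
  refine (hle x).antisymm (not_lt.mp fun hlt => ?_)
  obtain ⟨P, hPA, hPx, hP⟩ := exists_peak hβ x
  have h1 : ‖P * (Ψ f : C(Circle × Circle, ℂ))‖ < 1 := by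
    rw [ContinuousMap.norm_lt_iff _ one_pos]
    intro y
    rw [ContinuousMap.mul_apply, norm_mul]
    by_cases hy : y = x
    · rw [hy, hPx, norm_one, one_mul]
      exact hlt
    · exact mul_lt_one_of_nonneg_of_lt_one_left (norm_nonneg _) (hP y hy) (hle y)
  set h : algA α := Ψ.symm ⟨P, hPA⟩ with hh
  have h2 : ‖(h : C(Circle × Circle, ℂ)) * f‖ < 1 := by
    have := hΨ (h * f)
    rw [map_mul, hh, AlgEquiv.apply_symm_apply] at this
    exact this.symm.trans_lt h1
  have h3 : ‖(h : C(Circle × Circle, ℂ))‖ < 1 := by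
    rw [ContinuousMap.norm_lt_iff _ one_pos] at h2 ⊢
    intro y
    have := h2 y
    rwa [ContinuousMap.mul_apply, norm_mul, hf, mul_one] at this
  have h4 : ‖P‖ < 1 := by
    have := hΨ h
    rw [hh, AlgEquiv.apply_symm_apply] at this
    exact this.trans_lt h3
  have h5 := P.norm_coe_le_norm x
  rw [hPx, norm_one] at h5
  exact absurd h4 (not_lt.mpr h5)

/-! ### The form of isometric isomorphisms -/

/-- An isometric isomorphism is composition with a monomial map: it sends the characters of positive
weight to multiples of characters, so it agrees with such a composition on the coordinate functions
`z` and `w`, then on all characters, and then on `𝒜_α` by density. -/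
theorem exists_monoMap {α β : ℝ} (hα : 0 < α) (hβ : 0 < β) (hα' : Irrational α)
    (hβ' : Irrational β) (Ψ : algA α ≃ₐ[ℂ] algA β) (hΨ : ∀ f, ‖Ψ f‖ = ‖f‖) :
    ∃ (c₁ c₂ : Circle) (m₁ n₁ m₂ n₂ : ℤ), 0 ≤ (m₁ : ℝ) + β * n₁ ∧
      ∀ f : algA α, (Ψ f : C(Circle × Circle, ℂ)) =
        (f : C(Circle × Circle, ℂ)).comp (monoMap c₁ c₂ m₁ n₁ m₂ n₂) := by
  classical
  let X : ∀ m n : ℤ, 0 ≤ (m : ℝ) + α * n → algA α := fun m n h => ⟨chi m n, chi_mem_algA h⟩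
  let g : ℤ × ℤ → C(Circle × Circle, ℂ) := fun s =>
    if h : 0 ≤ (s.1 : ℝ) + α * s.2 then Ψ (X s.1 s.2 h) else 0
  have hgX : ∀ (m n : ℤ) (h : 0 ≤ (m : ℝ) + α * n), g (m, n) = Ψ (X m n h) := fun m n h => dif_pos h
  have hfam : ∀ m n : ℤ, 0 < (m : ℝ) + α * n →
      ∃ (c : Circle) (m' n' : ℤ), 0 ≤ (m' : ℝ) + β * n' ∧ g (m, n) = (c : ℂ) • chi m' n' := by
    intro m n hmn
    refine family_eq_smul_chi hα' hβ' (g := g) ?_ ?_ ?_ (s := (m, n)) hmn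
    · rintro ⟨k, l⟩ h
      rw [hgX _ _ h.le]
      exact (Ψ _).2
    · rintro ⟨k, l⟩ h p
      rw [hgX _ _ h.le]
      exact norm_map_eq_one hβ Ψ hΨ (fun p => norm_chi_apply _ _ p) p
    · rintro ⟨k, l⟩ ⟨k', l'⟩ h h'
      have h2 : 0 ≤ ((k + k' : ℤ) : ℝ) + α * (l + l' : ℤ) := by
        dsimp only at h h'
        push_cast
        linarith
      rw [Prod.mk_add_mk, hgX _ _ h.le, hgX _ _ h'.le, hgX _ _ h2, ← Subalgebra.coe_mul, ← map_mul]
      congr 2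
      exact Subtype.ext (chi_mul _ _ _ _).symm
  have w10 : 0 < ((1 : ℤ) : ℝ) + α * (0 : ℤ) := by simp
  have w01 : 0 < ((0 : ℤ) : ℝ) + α * (1 : ℤ) := by simpa using hα
  obtain ⟨c₁, m₁, n₁, hw, h10⟩ := hfam 1 0 w10
  obtain ⟨c₂, m₂, n₂, -, h01⟩ := hfam 0 1 w01
  refine ⟨c₁, c₂, m₁, n₁, m₂, n₂, hw, ?_⟩
  let T := ContinuousMap.compRightAlgHom ℂ ℂ (monoMap c₁ c₂ m₁ n₁ m₂ n₂)
  have hT : Continuous T := ContinuousMap.continuous_precomp _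
  let A₁ : algA α →ₐ[ℂ] C(Circle × Circle, ℂ) := (algA β).val.comp Ψ.toAlgHom
  let A₂ : algA α →ₐ[ℂ] C(Circle × Circle, ℂ) := T.comp (algA α).val
  have hA₁ : Continuous A₁ :=
    continuous_subtype_val.comp (AddMonoidHomClass.isometry_of_norm Ψ hΨ).continuous
  have hA₂ : Continuous A₂ := hT.comp continuous_subtype_val
  have e10 : A₁ (X 1 0 w10.le) = A₂ (X 1 0 w10.le) := by
    change (Ψ (X 1 0 w10.le) : C(Circle × Circle, ℂ)) = (chi 1 0).comp (monoMap _ _ _ _ _ _)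
    rw [chi_comp_monoMap, ← hgX 1 0 w10.le, h10]
    simp
  have e01 : A₁ (X 0 1 w01.le) = A₂ (X 0 1 w01.le) := by
    change (Ψ (X 0 1 w01.le) : C(Circle × Circle, ℂ)) = (chi 0 1).comp (monoMap _ _ _ _ _ _)
    rw [chi_comp_monoMap, ← hgX 0 1 w01.le, h01]
    simp
  have hpow : ∀ m n : ℤ, ∀ N : ℕ, chi m n ^ N = chi (N * m) (N * n) := by
    intro m n N
    induction N with
    | zero => simp [chi_zero]
    | succ N ih =>
      rw [pow_succ, ih, chi_mul]
      congr 1 <;> push_cast <;> ring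
  have eX : ∀ (m n : ℤ) (h : 0 ≤ (m : ℝ) + α * n), A₁ (X m n h) = A₂ (X m n h) := by
    intro m n h
    -- negative powers are moved to the other side, where they become elements of the algebra
    set u : algA α := X 1 0 w10.le ^ (-m).toNat * X 0 1 w01.le ^ (-n).toNat with hu
    set v : algA α := X 1 0 w10.le ^ m.toNat * X 0 1 w01.le ^ n.toNat with hv
    have huv : X m n h * u = v := by
      refine Subtype.ext ?_
      change chi m n * (chi 1 0 ^ (-m).toNat * chi 0 1 ^ (-n).toNat) =
        chi 1 0 ^ m.toNat * chi 0 1 ^ n.toNat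
      simp only [hpow, chi_mul]
      congr 1 <;> omega
    have eu : A₁ u = A₂ u := by rw [hu]; simp only [map_mul, map_pow, e10, e01]
    have ev : A₁ v = A₂ v := by rw [hv]; simp only [map_mul, map_pow, e10, e01]
    have e : A₁ (X m n h) * A₂ u = A₂ (X m n h) * A₂ u := by
      rw [← eu, ← map_mul, eu, ← map_mul, huv, ev]
    ext p
    refine mul_right_cancel₀ ?_ (DFunLike.congr_fun e p)
    change (chi 1 0 ^ (-m).toNat * chi 0 1 ^ (-n).toNat : C(Circle × Circle, ℂ)) _ ≠ 0
    simp only [hpow, chi_mul]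
    rw [← norm_ne_zero_iff, norm_chi_apply]
    exact one_ne_zero
  have hle : trigPoly (halfPlane α) ≤ (AlgHom.equalizer A₁ A₂).map (algA α).val := by
    refine Algebra.adjoin_le ?_
    rintro _ ⟨⟨m, n⟩, hk, rfl⟩
    exact ⟨X m n hk, eX m n hk, rfl⟩
  intro f
  change A₁ f = A₂ f
  obtain ⟨y, hy, hlim⟩ := mem_closure_iff_seq_limit.mp f.2
  choose z hz hzy using fun k => hle (hy k)
  have hlim' : Filter.Tendsto z Filter.atTop (nhds f) := by
    rw [tendsto_subtype_rng]
    exact hlim.congr fun k => (hzy k).symm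
  exact tendsto_nhds_unique ((hA₁.tendsto f).comp hlim')
    (((hA₂.tendsto f).comp hlim').congr fun k => (hz k).symm)

/-- A homomorphism `ℤ² → ℤ²` carrying the half-plane of `α` into that of `β` scales the weights. -/
theorem weight_eq {α β : ℝ} {m₁ n₁ m₂ n₂ : ℤ}
    (h : ∀ m n : ℤ, 0 ≤ (m : ℝ) + α * n →
      0 ≤ ((m * m₁ + n * m₂ : ℤ) : ℝ) + β * (m * n₁ + n * n₂ : ℤ)) :
    (m₂ : ℝ) + β * n₂ = α * ((m₁ : ℝ) + β * n₁) := by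
  set a := (m₁ : ℝ) + β * n₁ with ha
  set b := (m₂ : ℝ) + β * n₂ with hb
  have h' : ∀ m n : ℤ, 0 ≤ (m : ℝ) + α * n → 0 ≤ ((m : ℝ) + α * n) * a + n * (b - α * a) := by
    intro m n hmn
    have := h m n hmn
    push_cast at this
    rw [ha, hb]
    linarith
  have ha0 : 0 ≤ a := by simpa using h' 1 0 (by simp)
  have key : ∀ n : ℤ, 0 ≤ a + n * (b - α * a) := by
    intro n
    have h1 := Int.le_ceil (-(α * n))
    have h2 := Int.ceil_lt_add_one (-(α * n))
    have h3 := h' ⌈-(α * n)⌉ n (by linarith)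
    nlinarith
  by_contra hne
  have hD : b - α * a ≠ 0 := sub_ne_zero.mpr hne
  obtain ⟨N, hN⟩ := exists_nat_gt (a / |b - α * a|)
  rw [div_lt_iff₀ (abs_pos.mpr hD)] at hN
  have k1 := key N
  have k2 := key (-N)
  push_cast at k1 k2
  rcases abs_cases (b - α * a) with ⟨e, _⟩ | ⟨e, _⟩ <;> rw [e] at hN <;> linarith

theorem monoMap_monoMap {c₁ c₂ d₁ d₂ : Circle} {m₁ n₁ m₂ n₂ k₁ l₁ k₂ l₂ : ℤ}
    (h11 : m₁ * k₁ + n₁ * k₂ = 1) (h12 : m₁ * l₁ + n₁ * l₂ = 0)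
    (h21 : m₂ * k₁ + n₂ * k₂ = 0) (h22 : m₂ * l₁ + n₂ * l₂ = 1)
    (hc₁ : c₁ * d₁ ^ m₁ * d₂ ^ n₁ = 1) (hc₂ : c₂ * d₁ ^ m₂ * d₂ ^ n₂ = 1) (p : Circle × Circle) :
    monoMap c₁ c₂ m₁ n₁ m₂ n₂ (monoMap d₁ d₂ k₁ l₁ k₂ l₂ p) = p := by
  obtain ⟨z, w⟩ := p
  have e : ∀ (c : Circle) (m n : ℤ), c * (d₁ * z ^ k₁ * w ^ l₁) ^ m * (d₂ * z ^ k₂ * w ^ l₂) ^ n =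
      (c * d₁ ^ m * d₂ ^ n) * z ^ (m * k₁ + n * k₂) * w ^ (m * l₁ + n * l₂) := by
    intro c m n
    obtain ⟨a, rfl⟩ := Circle.exp_surjective d₁
    obtain ⟨b, rfl⟩ := Circle.exp_surjective d₂
    obtain ⟨u, rfl⟩ := Circle.exp_surjective z
    obtain ⟨v, rfl⟩ := Circle.exp_surjective w
    obtain ⟨c, rfl⟩ := Circle.exp_surjective c
    simp only [← Circle.exp_intCast_mul, ← Circle.exp_add]
    congr 1
    push_cast
    ring
  simp only [monoMap_apply, e, hc₁, hc₂, h11, h12, h21, h22]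
  simp

/-- A monomial map with matrix in `GL(2, ℤ)` is invertible, with monomial inverse. -/
theorem exists_monoMap_inv (c₁ c₂ : Circle) {m₁ n₁ m₂ n₂ ε : ℤ} (hdet : m₁ * n₂ - n₁ * m₂ = ε)
    (hε : ε * ε = 1) :
    ∃ d₁ d₂ : Circle,
      (∀ p, monoMap c₁ c₂ m₁ n₁ m₂ n₂ (monoMap d₁ d₂ (ε * n₂) (-ε * n₁) (-ε * m₂) (ε * m₁) p) = p) ∧
      ∀ p, monoMap d₁ d₂ (ε * n₂) (-ε * n₁) (-ε * m₂) (ε * m₁) (monoMap c₁ c₂ m₁ n₁ m₂ n₂ p) = p := by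
  obtain ⟨a, rfl⟩ := Circle.exp_surjective c₁
  obtain ⟨b, rfl⟩ := Circle.exp_surjective c₂
  have hdet' : (m₁ : ℝ) * n₂ - n₁ * m₂ = ε := by exact_mod_cast hdet
  have hε' : (ε : ℝ) * ε = 1 := by exact_mod_cast hε
  refine ⟨Circle.exp (-(ε * n₂ * a - ε * n₁ * b)), Circle.exp (-(-ε * m₂ * a + ε * m₁ * b)),
    monoMap_monoMap ?_ ?_ ?_ ?_ ?_ ?_, monoMap_monoMap ?_ ?_ ?_ ?_ ?_ ?_⟩
  · linear_combination ε * hdet + hε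
  · ring
  · ring
  · linear_combination ε * hdet + hε
  · simp only [← Circle.exp_intCast_mul, ← Circle.exp_add]
    rw [← Circle.exp_zero]
    congr 1
    linear_combination -a * ε * hdet' - a * hε'
  · simp only [← Circle.exp_intCast_mul, ← Circle.exp_add]
    rw [← Circle.exp_zero]
    congr 1
    linear_combination -b * ε * hdet' - b * hε'
  · linear_combination ε * hdet + hε
  · ring
  · ring
  · linear_combination ε * hdet + hε
  · simp only [← Circle.exp_intCast_mul, ← Circle.exp_add]
    rw [← Circle.exp_zero]
    congr 1
    push_cast
    ring
  · simp only [← Circle.exp_intCast_mul, ← Circle.exp_add]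
    rw [← Circle.exp_zero]
    congr 1
    push_cast
    ring

theorem isIsomIso_forward {α β : ℝ} (hα : 0 < α) (hβ : 0 < β) (hirrα : Irrational α)
    (hirrβ : Irrational β) {Φ : ↥(Aset α) → ↥(Aset β)} (h : IsIsomIso α β Φ) :
    ∃ (c₁ c₂ : Circle) (m₁ n₁ m₂ n₂ : ℤ),
      (m₁ * n₂ - n₁ * m₂ = 1 ∨ m₁ * n₂ - n₁ * m₂ = -1) ∧
      0 < (m₁ : ℝ) + β * n₁ ∧
      (m₂ : ℝ) + β * n₂ = α * ((m₁ : ℝ) + β * n₁) ∧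
      ∀ (f : ↥(Aset α)) (z w : Circle),
        (↑(Φ f) : C(Circle × Circle, ℂ)) (z, w) =
          (↑f : C(Circle × Circle, ℂ)) (c₁ * z ^ m₁ * w ^ n₁, c₂ * z ^ m₂ * w ^ n₂) := by
  obtain ⟨Ψ, hΨ, hΦ⟩ := h.exists_algEquiv
  obtain ⟨c₁, c₂, m₁, n₁, m₂, n₂, hw, hc⟩ := exists_monoMap hα hβ hirrα hirrβ Ψ hΨ
  obtain ⟨d₁, d₂, k₁, l₁, k₂, l₂, -, hd⟩ := exists_monoMap hβ hα hirrβ hirrα Ψ.symm fun f => by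
    rw [← hΨ, AlgEquiv.apply_symm_apply]
  have hwt : ∀ m n : ℤ, 0 ≤ (m : ℝ) + α * n →
      0 ≤ ((m * m₁ + n * m₂ : ℤ) : ℝ) + β * (m * n₁ + n * n₂ : ℤ) := by
    intro m n hmn
    have h1 := (Ψ ⟨chi m n, chi_mem_algA hmn⟩).2
    rw [hc, chi_comp_monoMap] at h1
    exact weight_nonneg_of_mem h1
  -- composing with the inverse isomorphism shows that the two integer matrices are inverse
  have hinv : ∀ m n : ℤ, 0 ≤ (m : ℝ) + β * n →
      m = (m * k₁ + n * k₂) * m₁ + (m * l₁ + n * l₂) * m₂ ∧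
      n = (m * k₁ + n * k₂) * n₁ + (m * l₁ + n * l₂) * n₂ := by
    intro m n hmn
    have h1 := hc (Ψ.symm ⟨chi m n, chi_mem_algA hmn⟩)
    rw [AlgEquiv.apply_symm_apply, hd] at h1
    dsimp only at h1
    rw [chi_comp_monoMap] at h1
    have h2 : ∀ (r : ℂ) (f : C(Circle × Circle, ℂ)) (φ : C(Circle × Circle, Circle × Circle)),
        (r • f).comp φ = r • f.comp φ :=
      fun _ _ _ => rfl
    rw [h2, chi_comp_monoMap, smul_smul, ← Circle.coe_mul] at h1
    exact chi_injective h1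
  obtain ⟨i1, i2⟩ := hinv 1 0 (by simp)
  obtain ⟨i3, i4⟩ := hinv 0 1 (by simpa using hβ.le)
  simp only [one_mul, zero_mul, add_zero, zero_add] at i1 i2 i3 i4
  have hdet : m₁ * n₂ - n₁ * m₂ = 1 ∨ m₁ * n₂ - n₁ * m₂ = -1 := by
    refine Int.isUnit_iff.mp (IsUnit.of_mul_eq_one (k₁ * l₂ - l₁ * k₂) ?_)
    linear_combination (-(k₂ * n₁ + l₂ * n₂)) * i1 + (k₂ * m₁ + l₂ * m₂) * i2 - i4
  refine ⟨c₁, c₂, m₁, n₁, m₂, n₂, hdet, hw.lt_of_ne' fun h0 => ?_, weight_eq hwt, fun f z w => ?_⟩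
  · have hn : n₁ = 0 := by
      by_contra hn
      have hn' : (n₁ : ℝ) ≠ 0 := by exact_mod_cast hn
      refine hirrβ ⟨-m₁ / n₁, ?_⟩
      push_cast
      field_simp
      linarith
    rw [hn, Int.cast_zero, mul_zero, add_zero] at h0
    have hm : m₁ = 0 := by exact_mod_cast h0
    rw [hn, hm] at hdet
    simp at hdet
  · rw [hΦ, hc]
    rfl

theorem isIsomIso_backward {α β : ℝ} {Φ : ↥(Aset α) → ↥(Aset β)} {c₁ c₂ : Circle}
    {m₁ n₁ m₂ n₂ : ℤ} (hdet : m₁ * n₂ - n₁ * m₂ = 1 ∨ m₁ * n₂ - n₁ * m₂ = -1)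
    (hpos : 0 < (m₁ : ℝ) + β * n₁) (hwt : (m₂ : ℝ) + β * n₂ = α * ((m₁ : ℝ) + β * n₁))
    (hΦ : ∀ f : ↥(Aset α), (Φ f : C(Circle × Circle, ℂ)) =
      (f : C(Circle × Circle, ℂ)).comp (monoMap c₁ c₂ m₁ n₁ m₂ n₂)) :
    IsIsomIso α β Φ := by
  obtain ⟨ε, hε⟩ : ∃ ε, ε = m₁ * n₂ - n₁ * m₂ := ⟨_, rfl⟩
  rw [← hε] at hdet
  have hεε : ε * ε = 1 := by rcases hdet with h | h <;> rw [h] <;> rfl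
  obtain ⟨d₁, d₂, hcd, hdc⟩ := exists_monoMap_inv c₁ c₂ hε.symm hεε
  have hnorm : ∀ f : ↥(Aset α),
      ‖(Φ f : C(Circle × Circle, ℂ))‖ = ‖(f : C(Circle × Circle, ℂ))‖ := by
    intro f
    rw [hΦ]
    refine le_antisymm ?_ ?_ <;> refine (ContinuousMap.norm_le _ (norm_nonneg _)).mpr fun p => ?_
    · exact (f : C(Circle × Circle, ℂ)).norm_coe_le_norm _
    · have := ((f : C(Circle × Circle, ℂ)).comp (monoMap c₁ c₂ m₁ n₁ m₂ n₂)).norm_coe_le_norm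
        (monoMap d₁ d₂ (ε * n₂) (-ε * n₁) (-ε * m₂) (ε * m₁) p)
      rwa [ContinuousMap.comp_apply, hcd] at this
  refine ⟨⟨fun f g hfg => ?_, fun g => ?_⟩, fun f g h hh => ?_, fun c f g hh => ?_,
    fun f g h hh => ?_, hnorm⟩
  · refine Subtype.ext (ContinuousMap.ext fun p => ?_)
    have h1 : (Φ f : C(Circle × Circle, ℂ)) = Φ g := by rw [hfg]
    rw [hΦ, hΦ] at h1
    have := DFunLike.congr_fun h1 (monoMap d₁ d₂ (ε * n₂) (-ε * n₁) (-ε * m₂) (ε * m₁) p)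
    rwa [ContinuousMap.comp_apply, ContinuousMap.comp_apply, hcd] at this
  · have hmem := comp_monoMap_mem (α := β) (β := α) (c₁ := d₁) (c₂ := d₂) (m₁ := ε * n₂)
      (n₁ := -ε * n₁) (m₂ := -ε * m₂) (n₂ := ε * m₁) (fun m n hmn => by
        -- the inverse matrix divides the weights by `m₁ + β n₁`
        have hε' : (ε : ℝ) = m₁ * n₂ - n₁ * m₂ := by exact_mod_cast hε
        have hεε' : (ε : ℝ) * ε = 1 := by exact_mod_cast hεε
        have e : (((m * (ε * n₂) + n * (-ε * m₂) : ℤ) : ℝ) +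
            α * (m * (-ε * n₁) + n * (ε * m₁) : ℤ)) * ((m₁ : ℝ) + β * n₁) = m + β * n := by
          push_cast
          linear_combination (m * ε * n₁ - n * ε * m₁) * hwt - (m + β * n) * ε * hε' +
            (m + β * n) * hεε'
        exact nonneg_of_mul_nonneg_left (e.symm ▸ hmn) hpos) (mem_Aset.mp g.2)
    refine ⟨⟨_, mem_Aset.mpr hmem⟩, Subtype.ext (ContinuousMap.ext fun p => ?_)⟩
    rw [hΦ]
    simp only [ContinuousMap.comp_apply]
    rw [hdc]
  · rw [hΦ, hΦ, hΦ, hh]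
    rfl
  · rw [hΦ, hΦ, hh]
    rfl
  · rw [hΦ, hΦ, hΦ, hh]
    rfl

/-- `Φ : 𝒜_α → 𝒜_β` is an isometric isomorphism if and only if it is composition with a
map `(z,w) ↦ (c₁ z^{m₁} w^{n₁}, c₂ z^{m₂} w^{n₂})` where `c₁, c₂` are unimodular constants
and `[[m₁,n₁],[m₂,n₂]] ∈ GL(2,ℤ)` satisfies `m₁ + βn₁ > 0` and
`m₂ + βn₂ = α(m₁ + βn₁)`. -/
theorem isIsomIso_iff
    (α β : ℝ) (hα : 0 < α) (hβ : 0 < β) (hirrα : Irrational α) (hirrβ : Irrational β)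
    (Φ : ↥(Aset α) → ↥(Aset β)) :
    IsIsomIso α β Φ ↔
    ∃ (c₁ c₂ : Circle) (m₁ n₁ m₂ n₂ : ℤ),
      (m₁ * n₂ - n₁ * m₂ = 1 ∨ m₁ * n₂ - n₁ * m₂ = -1) ∧
      0 < (m₁ : ℝ) + β * n₁ ∧
      (m₂ : ℝ) + β * n₂ = α * ((m₁ : ℝ) + β * n₁) ∧
      ∀ (f : ↥(Aset α)) (z w : Circle),
        (↑(Φ f) : C(Circle × Circle, ℂ)) (z, w) =
          (↑f : C(Circle × Circle, ℂ)) (c₁ * z ^ m₁ * w ^ n₁, c₂ * z ^ m₂ * w ^ n₂) := by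
  constructor
  · exact isIsomIso_forward hα hβ hirrα hirrβ
  · rintro ⟨c₁, c₂, m₁, n₁, m₂, n₂, hdet, hpos, hwt, hΦ⟩
    exact isIsomIso_backward hdet hpos hwt fun f => ContinuousMap.ext fun p => hΦ f p.1 p.2
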